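/- arXiv:1907.02132 — 3 statements merged into one kernel-verified Lean document; each statement's English description precedes it below -/
import Mathlib

section
/- I_α is a Borel subset of the metric space (I_H, d_H'), and I_α is dense in (I_H, d_H'). -/
/-!
Density: finitely many blocks of `β` carry all but `ε` of its mass. Placing intervals of the same
lengths next to each other gives a partition with finitely many blocks, hence of diversity `0`
everywhere, at distance less than `ε` from `β` (`dense_aux`).

Borel measurability: write `N_h(t)` for the number of blocks of mass `> h` ending at or before `t`.
In a correspondence of small distortion, large blocks are matched and the matched blocks have
nearly the same mass and right endpoint. Hence the count of blocks of mass `> h` ending strictly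
before `t` is lower semicontinuous (`isOpen_count`), and `N_h(t)`, being right-continuous in `t`,
is a Borel function of the partition (`measurable_divCount`). As `N_h(t)` is also right-continuous
in `h`, convergence of `h^a N_h(t)` as `h ↓ 0` can be tested along rational `h`, so for a fixed `t`
it is a Borel condition.

It remains to replace the quantifier over all real `t` by a countable one. Suppose that the limit
`D(r)` exists at all rational times `r`. At a real `t` where the nondecreasing function `D` does not
jump, convergence follows by squeezing. At an irrational jump point `t` some rational level `c` is
skipped, and `N_h(t)` is the infimum of `N_h(r)` over the rationals `r` with `D(r) ≥ c`; this
infimum, `levelCount`, is Borel in the partition for each fixed `c`. Thus the diversity property is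
equivalent to convergence at all rational times and at all rational levels.
-/

open MeasureTheory Filter Topology Set

/-- An interval partition of `[0, L]`: a set of disjoint open subintervals whose
complement in `[0, L]` is Lebesgue-null. A block is encoded by its endpoint pair
`(a, b)` with `a < b`, representing the open interval `(a, b)`. -/
structure IntervalPartition where
  length : ℝ
  length_nonneg : 0 ≤ length
  blocks : Set (ℝ × ℝ)
  blocks_lt : ∀ p ∈ blocks, p.1 < p.2
  blocks_sub : ∀ p ∈ blocks, 0 ≤ p.1 ∧ p.2 ≤ length
  blocks_disjoint : ∀ p ∈ blocks, ∀ q ∈ blocks, p ≠ q →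
    Set.Ioo p.1 p.2 ∩ Set.Ioo q.1 q.2 = ∅
  compl_null : volume (Set.Icc 0 length \ ⋃ p ∈ blocks, Set.Ioo p.1 p.2) = 0

namespace IntervalPartition

/-- The mass (Lebesgue measure) of a block `(a, b)`. -/
def mass (p : ℝ × ℝ) : ℝ := p.2 - p.1

/-- The complement `C_β = [0, ‖β‖] \ ⋃_{U ∈ β} U`. -/
def cset (β : IntervalPartition) : Set ℝ :=
  Set.Icc 0 β.length \ ⋃ p ∈ β.blocks, Set.Ioo p.1 p.2

/-- A correspondence between `β` and `γ`: a finite sequence of pairs of blocks,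
strictly increasing in the left-to-right order in each coordinate. -/
def IsCorrespondence (β γ : IntervalPartition) (n : ℕ)
    (c : Fin n → (ℝ × ℝ) × (ℝ × ℝ)) : Prop :=
  (∀ j, (c j).1 ∈ β.blocks ∧ (c j).2 ∈ γ.blocks) ∧
  (∀ j k : Fin n, j < k → (c j).1.2 ≤ (c k).1.1 ∧ (c j).2.2 ≤ (c k).2.1)

/-- The Hausdorff distortion of a correspondence: the maximum of quantities
(i) and (ii) of the paper. -/
noncomputable def hausDistortion (β γ : IntervalPartition) (n : ℕ)
    (c : Fin n → (ℝ × ℝ) × (ℝ × ℝ)) : ℝ :=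
  max ((∑ j : Fin n, |mass (c j).1 - mass (c j).2|) + β.length - ∑ j : Fin n, mass (c j).1)
      ((∑ j : Fin n, |mass (c j).1 - mass (c j).2|) + γ.length - ∑ j : Fin n, mass (c j).2)

/-- The metric `d_H'`: infimum of the Hausdorff distortion over all correspondences. -/
noncomputable def dHp (β γ : IntervalPartition) : ℝ :=
  sInf {x | ∃ n, ∃ c : Fin n → (ℝ × ℝ) × (ℝ × ℝ),
    IsCorrespondence β γ n c ∧ x = hausDistortion β γ n c}

/-- The metric `d_H`: the Hausdorff distance between the complements. -/
noncomputable def dH (β γ : IntervalPartition) : ℝ :=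
  Metric.hausdorffDist β.cset γ.cset

/-- The number of blocks of mass `> h` ending at or before `t`. -/
noncomputable def divCount (β : IntervalPartition) (t h : ℝ) : ℕ :=
  Set.ncard {p : ℝ × ℝ | p ∈ β.blocks ∧ h < p.2 - p.1 ∧ p.2 ≤ t}

/-- `β` has `a`-diversity `d` at `t`:
`Γ(1-a) · lim_{h↓0} h^a · #{(x,y) ∈ β : y - x > h, y ≤ t} = d`. -/
def HasDiversity (a : ℝ) (β : IntervalPartition) (t d : ℝ) : Prop :=
  Tendsto (fun h : ℝ => Real.Gamma (1 - a) * h ^ a * (divCount β t h : ℝ))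
    (𝓝[>] 0) (𝓝 d)

/-- The `a`-diversity property: the diversity limit exists at every `t ∈ [0, ‖β‖]`. -/
def HasDiversityProp (a : ℝ) (β : IntervalPartition) : Prop :=
  ∀ t ∈ Set.Icc 0 β.length, ∃ d, HasDiversity a β t d

/-- The diversity function `𝒟_β(t)` (the value of the limit, when it exists). -/
noncomputable def diversity (a : ℝ) (β : IntervalPartition) (t : ℝ) : ℝ :=
  limUnder (𝓝[>] (0:ℝ)) (fun h : ℝ => Real.Gamma (1 - a) * h ^ a * (divCount β t h : ℝ))

/-- The total diversity `𝒟_β(∞) = 𝒟_β(‖β‖)`. -/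
noncomputable def totalDiversity (a : ℝ) (β : IntervalPartition) : ℝ :=
  diversity a β β.length

/-- The diversity `𝒟_β(U)` of a block `U`, evaluated at its midpoint. -/
noncomputable def blockDiversity (a : ℝ) (β : IntervalPartition) (p : ℝ × ℝ) : ℝ :=
  diversity a β ((p.1 + p.2) / 2)

/-- The `a`-distortion of a correspondence: the maximum of quantities (i)-(iv). -/
noncomputable def alphaDistortion (a : ℝ) (β γ : IntervalPartition) (n : ℕ)
    (c : Fin n → (ℝ × ℝ) × (ℝ × ℝ)) : ℝ :=
  max (hausDistortion β γ n c)
    (max (⨆ j : Fin n, |blockDiversity a β (c j).1 - blockDiversity a γ (c j).2|)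
         |totalDiversity a β - totalDiversity a γ|)

/-- The metric `d_α`: infimum of the `a`-distortion over all correspondences. -/
noncomputable def dA (a : ℝ) (β γ : IntervalPartition) : ℝ :=
  sInf {x | ∃ n, ∃ c : Fin n → (ℝ × ℝ) × (ℝ × ℝ),
    IsCorrespondence β γ n c ∧ x = alphaDistortion a β γ n c}

end IntervalPartition

/-- A point of the space `J`: an interval partition `η` together with an increasing,
right-continuous function `f` that is constant on every block of `η`, on `[‖η‖, ∞)`,
and (as `f` is defined on `[0, ∞]`) on `(-∞, 0]`. -/
structure JPoint where
  part : IntervalPartition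
  f : ℝ → ℝ
  f_nonneg : ∀ t, 0 ≤ f t
  f_mono : Monotone f
  f_rightCont : ∀ t, ContinuousWithinAt f (Set.Ici t) t
  f_const_block : ∀ p ∈ part.blocks, ∀ s ∈ Set.Ioo p.1 p.2, ∀ t ∈ Set.Ioo p.1 p.2, f s = f t
  f_const_top : ∀ t, part.length ≤ t → f t = f part.length
  f_const_neg : ∀ t, t ≤ (0:ℝ) → f t = f 0

/-- The distortion of a correspondence between two points of `J`: as the
`a`-distortion, but with `f`, `g` in place of the diversity functions. -/
noncomputable def jDistortion (x y : JPoint) (n : ℕ)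
    (c : Fin n → (ℝ × ℝ) × (ℝ × ℝ)) : ℝ :=
  max (IntervalPartition.hausDistortion x.part y.part n c)
    (max (⨆ j : Fin n, |x.f (((c j).1.1 + (c j).1.2) / 2) - y.f (((c j).2.1 + (c j).2.2) / 2)|)
         |x.f x.part.length - y.f y.part.length|)

/-- The metric `d_J` on `J`. -/
noncomputable def dJ (x y : JPoint) : ℝ :=
  sInf {r | ∃ n, ∃ c : Fin n → (ℝ × ℝ) × (ℝ × ℝ),
    IntervalPartition.IsCorrespondence x.part y.part n c ∧ r = jDistortion x y n c}

/-- The topology on `I_H` generated by the open `d_H'`-balls (i.e. the topology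
of the metric `d_H'`). -/
noncomputable def dHpTopology : TopologicalSpace IntervalPartition :=
  TopologicalSpace.generateFrom
    {s : Set IntervalPartition | ∃ β : IntervalPartition, ∃ r : ℝ,
      s = {γ | IntervalPartition.dHp β γ < r}}

/-! ### Finite families of blocks -/

namespace IntervalPartition

theorem volume_biUnion_blocks (β : IntervalPartition) (F : Finset (ℝ × ℝ))
    (hF : ∀ p ∈ F, p ∈ β.blocks) :
    volume (⋃ p ∈ F, Set.Ioo p.1 p.2) = ENNReal.ofReal (∑ p ∈ F, mass p) := by
  rw [measure_biUnion_finset, ENNReal.ofReal_sum_of_nonneg]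
  · simp [mass]
  · intro p hp
    have := β.blocks_lt p (hF p hp)
    simp only [mass]; linarith
  · intro p hp q hq hpq
    exact Set.disjoint_iff_inter_eq_empty.2 (β.blocks_disjoint p (hF p hp) q (hF q hq) hpq)
  · intro p _
    exact measurableSet_Ioo

theorem sum_mass_le (β : IntervalPartition) (F : Finset (ℝ × ℝ))
    (hF : ∀ p ∈ F, p ∈ β.blocks) {x y : ℝ} (hxy : x ≤ y)
    (h : ∀ p ∈ F, x ≤ p.1 ∧ p.2 ≤ y) : ∑ p ∈ F, mass p ≤ y - x := by
  have h1 : volume (⋃ p ∈ F, Set.Ioo p.1 p.2) ≤ volume (Set.Icc x y) := by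
    apply measure_mono
    intro z hz
    simp only [Set.mem_iUnion, exists_prop] at hz
    obtain ⟨p, hp, hz⟩ := hz
    exact ⟨(h p hp).1.trans hz.1.le, hz.2.le.trans (h p hp).2⟩
  rw [volume_biUnion_blocks β F hF, Real.volume_Icc] at h1
  exact (ENNReal.ofReal_le_ofReal_iff (by linarith)).1 h1

theorem seq_injective (β : IntervalPartition) {n : ℕ} {b : Fin n → ℝ × ℝ}
    (hb : ∀ j, b j ∈ β.blocks) (hs : ∀ j k, j < k → (b j).2 ≤ (b k).1) :
    Function.Injective b := by
  intro j k hjk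
  have h1 := β.blocks_lt _ (hb j)
  have h2 := β.blocks_lt _ (hb k)
  rcases lt_trichotomy j k with h | h | h
  · have := hs _ _ h
    rw [hjk] at this
    linarith
  · exact h
  · have := hs _ _ h
    rw [hjk] at this
    linarith

theorem sum_seq_le (β : IntervalPartition) {n : ℕ} {b : Fin n → ℝ × ℝ}
    (hb : ∀ j, b j ∈ β.blocks) (hs : ∀ j k, j < k → (b j).2 ≤ (b k).1)
    (s : Finset (Fin n)) {x y : ℝ} (hxy : x ≤ y)
    (h : ∀ j ∈ s, x ≤ (b j).1 ∧ (b j).2 ≤ y) : ∑ j ∈ s, mass (b j) ≤ y - x := by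
  classical
  have := sum_mass_le β (s.image b) (by simpa using fun j _ => hb j) hxy (by simpa using h)
  rwa [Finset.sum_image (fun j _ k _ hjk => seq_injective β hb hs hjk)] at this

theorem sum_seq_le_length (β : IntervalPartition) {n : ℕ} {b : Fin n → ℝ × ℝ}
    (hb : ∀ j, b j ∈ β.blocks) (hs : ∀ j k, j < k → (b j).2 ≤ (b k).1) :
    ∑ j, mass (b j) ≤ β.length := by
  simpa using sum_seq_le β hb hs Finset.univ β.length_nonneg
    (fun j _ => β.blocks_sub _ (hb j))

theorem finite_large (β : IntervalPartition) {h : ℝ} (hh : 0 < h) :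
    {p | p ∈ β.blocks ∧ h < p.2 - p.1}.Finite := by
  by_contra hinf
  obtain ⟨N, hN⟩ := exists_nat_gt (β.length / h)
  obtain ⟨F, hF, hc⟩ := Set.Infinite.exists_subset_card_eq hinf N
  have h1 := sum_mass_le β F (fun p hp => (hF hp).1) β.length_nonneg
    (fun p hp => β.blocks_sub p (hF hp).1)
  have h2 : F.card • h ≤ ∑ p ∈ F, mass p :=
    Finset.card_nsmul_le_sum F _ _ (fun p hp => (hF hp).2.le)
  rw [hc, nsmul_eq_mul] at h2
  rw [div_lt_iff₀ hh] at hN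
  linarith

/-- Since the complement of the blocks is null, finitely many blocks carry all but `ε` of
the mass. -/
theorem exists_finset_mass (β : IntervalPartition) {ε : ℝ} (hε : 0 < ε) :
    ∃ F : Finset (ℝ × ℝ), (∀ p ∈ F, p ∈ β.blocks) ∧ β.length - ε < ∑ p ∈ F, mass p := by
  rcases lt_or_ge (β.length - ε) 0 with hneg | hpos
  · exact ⟨∅, by simp, by simpa using hneg⟩
  have hdisj : β.blocks.PairwiseDisjoint (fun p => Set.Ioo p.1 p.2) := by
    intro p hp q hq hpq
    exact Set.disjoint_iff_inter_eq_empty.2 (β.blocks_disjoint p hp q hq hpq)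
  have hcount : β.blocks.Countable := by
    refine hdisj.countable_of_isOpen (fun p _ => isOpen_Ioo) (fun p hp => ?_)
    exact Set.nonempty_Ioo.2 (β.blocks_lt p hp)
  have h1 : ENNReal.ofReal β.length ≤ ∑' p : β.blocks, ENNReal.ofReal (mass p) := by
    calc ENNReal.ofReal β.length = volume (Set.Icc 0 β.length) := by simp
      _ ≤ volume (⋃ p ∈ β.blocks, Set.Ioo p.1 p.2) := by
        refine (measure_mono_ae ?_)
        rw [MeasureTheory.ae_le_set]
        exact β.compl_null
      _ = ∑' p : β.blocks, volume (Set.Ioo p.1.1 p.1.2) :=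
        measure_biUnion hcount hdisj (fun p _ => measurableSet_Ioo)
      _ = _ := by simp [mass]
  have h2 : ENNReal.ofReal (β.length - ε) < ∑' p : β.blocks, ENNReal.ofReal (mass p) :=
    lt_of_lt_of_le ((ENNReal.ofReal_lt_ofReal_iff (by linarith)).2 (by linarith)) h1
  rw [ENNReal.tsum_eq_iSup_sum, lt_iSup_iff] at h2
  obtain ⟨s, hs⟩ := h2
  refine ⟨s.map (Function.Embedding.subtype _), by simp +contextual, ?_⟩
  rw [← ENNReal.ofReal_sum_of_nonneg] at hs
  · rw [Finset.sum_map]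
    exact (ENNReal.ofReal_lt_ofReal_iff_of_nonneg hpos).1 hs
  · intro p _
    have := β.blocks_lt p p.2
    simp only [mass]; linarith

/-- Two disjoint blocks are ordered in the same way as their left endpoints. -/
theorem block_le (β : IntervalPartition) {p q : ℝ × ℝ} (hp : p ∈ β.blocks) (hq : q ∈ β.blocks)
    (hpq : p ≠ q) (h : p.1 ≤ q.1) : p.2 ≤ q.1 := by
  by_contra! hlt
  have hq' := β.blocks_lt q hq
  obtain ⟨z, hz1, hz2⟩ := exists_between (lt_min hlt hq')
  have : z ∈ Set.Ioo p.1 p.2 ∩ Set.Ioo q.1 q.2 :=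
    ⟨⟨h.trans_lt hz1, hz2.trans_le (min_le_left _ _)⟩, hz1, hz2.trans_le (min_le_right _ _)⟩
  rw [β.blocks_disjoint p hp q hq hpq] at this
  exact this

/-- A finite family of blocks, listed from left to right. -/
theorem exists_sorted (β : IntervalPartition) (F : Finset (ℝ × ℝ))
    (hF : ∀ p ∈ F, p ∈ β.blocks) :
    ∃ n : ℕ, ∃ b : Fin n → ℝ × ℝ, (∀ j, b j ∈ β.blocks) ∧
      (∀ j k, j < k → (b j).2 ≤ (b k).1) ∧ ∑ j, mass (b j) = ∑ p ∈ F, mass p := by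
  let F' : Finset (ℝ ×ₗ ℝ) := F.map toLex.toEmbedding
  let e := F'.orderIsoOfFin rfl
  have hmem : ∀ j, ofLex (e j : ℝ ×ₗ ℝ) ∈ F := by
    intro j
    have := (e j).2
    simp only [F', Finset.mem_map] at this
    obtain ⟨p, hp, hpe⟩ := this
    rw [← hpe]
    exact hp
  refine ⟨F'.card, fun j => ofLex (e j : ℝ ×ₗ ℝ), fun j => hF _ (hmem j), ?_, ?_⟩
  · intro j k hjk
    have hlt : (e j : ℝ ×ₗ ℝ) < e k := e.strictMono hjk
    refine block_le β (hF _ (hmem j)) (hF _ (hmem k)) ?_ ?_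
    · intro heq
      exact hlt.ne (ofLex.injective heq)
    · rcases Prod.Lex.lt_iff.1 hlt with h | h
      · exact h.le
      · exact h.1.le
  · refine (Equiv.sum_comp e.toEquiv (fun x : F' => mass (ofLex (x : ℝ ×ₗ ℝ)))).trans ?_
    rw [Finset.sum_coe_sort F' (fun x => mass (ofLex x))]
    simp [F']

/-! ### The distance `dHp` -/

theorem hausDistortion_nonneg (β γ : IntervalPartition) {n : ℕ}
    {c : Fin n → (ℝ × ℝ) × (ℝ × ℝ)} (hc : IsCorrespondence β γ n c) :
    0 ≤ hausDistortion β γ n c := by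
  have h1 := sum_seq_le_length β (fun j => (hc.1 j).1) (fun j k h => (hc.2 j k h).1)
  have h2 : 0 ≤ ∑ j : Fin n, |mass (c j).1 - mass (c j).2| :=
    Finset.sum_nonneg (fun _ _ => abs_nonneg _)
  exact le_max_of_le_left (by linarith)

theorem dHp_le (β γ : IntervalPartition) {n : ℕ}
    {c : Fin n → (ℝ × ℝ) × (ℝ × ℝ)} (hc : IsCorrespondence β γ n c) :
    dHp β γ ≤ hausDistortion β γ n c := by
  refine csInf_le ⟨0, ?_⟩ ⟨n, c, hc, rfl⟩
  rintro _ ⟨n, c, hc, rfl⟩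
  exact hausDistortion_nonneg β γ hc

theorem exists_of_dHp_lt {β γ : IntervalPartition} {r : ℝ} (h : dHp β γ < r) :
    ∃ n, ∃ c : Fin n → (ℝ × ℝ) × (ℝ × ℝ), IsCorrespondence β γ n c ∧
      hausDistortion β γ n c < r := by
  have hne : {x | ∃ n, ∃ c : Fin n → (ℝ × ℝ) × (ℝ × ℝ),
      IsCorrespondence β γ n c ∧ x = hausDistortion β γ n c}.Nonempty :=
    ⟨_, 0, Fin.elim0, ⟨fun j => j.elim0, fun j => j.elim0⟩, rfl⟩
  obtain ⟨_, ⟨n, c, hc, rfl⟩, hlt⟩ := exists_lt_of_csInf_lt hne h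
  exact ⟨n, c, hc, hlt⟩

theorem dHp_self_lt (β : IntervalPartition) {r : ℝ} (hr : 0 < r) : dHp β β < r := by
  obtain ⟨F, hF, hsum⟩ := exists_finset_mass β hr
  obtain ⟨n, b, hb, hs, hbs⟩ := exists_sorted β F hF
  refine (dHp_le β β (n := n) (c := fun j => (b j, b j))
    ⟨fun j => ⟨hb j, hb j⟩, fun j k h => ⟨hs j k h, hs j k h⟩⟩).trans_lt ?_
  simp only [hausDistortion, sub_self, abs_zero, Finset.sum_const_zero, zero_add, max_self]
  linarith

/-! ### Density -/

theorem hasDiversityProp_of_finite {a : ℝ} (ha : 0 < a) (ha' : a < 1) (β : IntervalPartition)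
    (hfin : β.blocks.Finite) : HasDiversityProp a β := by
  intro t _
  refine ⟨0, ?_⟩
  have hΓ : 0 < Real.Gamma (1 - a) := Real.Gamma_pos_of_pos (by linarith)
  have hpow : Tendsto (fun h : ℝ => Real.Gamma (1 - a) * h ^ a * (β.blocks.ncard : ℝ))
      (𝓝[>] 0) (𝓝 0) := by
    have h0 : Tendsto (fun h : ℝ => h ^ a) (𝓝[>] 0) (𝓝 0) := by
      have := (Real.continuousAt_rpow_const 0 a (Or.inr ha.le)).tendsto
      rw [Real.zero_rpow ha.ne'] at this
      exact this.mono_left nhdsWithin_le_nhds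
    simpa using (h0.const_mul (Real.Gamma (1 - a))).mul_const (β.blocks.ncard : ℝ)
  refine tendsto_of_tendsto_of_tendsto_of_le_of_le' tendsto_const_nhds hpow ?_ ?_
  · filter_upwards [self_mem_nhdsWithin] with h hh
    have : 0 < h := hh
    positivity
  · filter_upwards [self_mem_nhdsWithin] with h hh
    have : 0 < h := hh
    have hle : divCount β t h ≤ β.blocks.ncard := Set.ncard_le_ncard (fun p hp => hp.1) hfin
    gcongr

/-- The interval partition whose blocks are finitely many intervals of prescribed positive
lengths `m 0, …, m (n - 1)`, placed next to each other starting at `0`. -/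
noncomputable def concat (n : ℕ) (m : ℕ → ℝ) (hm : ∀ i < n, 0 < m i) : IntervalPartition :=
  have hmono : ∀ i j, i ≤ j → j ≤ n →
      ∑ k ∈ Finset.range i, m k ≤ ∑ k ∈ Finset.range j, m k := fun i j hij hj =>
    Finset.sum_le_sum_of_subset_of_nonneg (by simpa using hij)
      (fun k hk _ => (hm k (lt_of_lt_of_le (by simpa using hk) hj)).le)
  have hdisj : ∀ i < n, ∀ j < n, i < j → Disjoint
      (Set.Ioo (∑ k ∈ Finset.range i, m k) (∑ k ∈ Finset.range (i + 1), m k))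
      (Set.Ioo (∑ k ∈ Finset.range j, m k) (∑ k ∈ Finset.range (j + 1), m k)) := by
    intro i _ j hj hij
    rw [Set.disjoint_left]
    intro z hz hz'
    have := hmono (i + 1) j hij hj.le
    linarith [hz.2, hz'.1]
  have hdisj' : ∀ i < n, ∀ j < n, i ≠ j → Disjoint
      (Set.Ioo (∑ k ∈ Finset.range i, m k) (∑ k ∈ Finset.range (i + 1), m k))
      (Set.Ioo (∑ k ∈ Finset.range j, m k) (∑ k ∈ Finset.range (j + 1), m k)) := by
    intro i hi j hj hij
    rcases lt_or_gt_of_ne hij with h | h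
    · exact hdisj i hi j hj h
    · exact (hdisj j hj i hi h).symm
  { length := ∑ k ∈ Finset.range n, m k
    length_nonneg := by simpa using hmono 0 n (Nat.zero_le _) le_rfl
    blocks := {p | ∃ i < n, p = (∑ k ∈ Finset.range i, m k, ∑ k ∈ Finset.range (i + 1), m k)}
    blocks_lt := by
      rintro _ ⟨i, hi, rfl⟩
      have := hm i hi
      simp only [Finset.sum_range_succ]
      linarith
    blocks_sub := by
      rintro _ ⟨i, hi, rfl⟩
      exact ⟨by simpa using hmono 0 i (Nat.zero_le _) hi.le, hmono (i + 1) n hi le_rfl⟩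
    blocks_disjoint := by
      rintro _ ⟨i, hi, rfl⟩ _ ⟨j, hj, rfl⟩ hne
      refine Set.disjoint_iff_inter_eq_empty.1 (hdisj' i hi j hj ?_)
      rintro rfl
      exact hne rfl
    compl_null := by
      have hU : (⋃ p ∈ {p : ℝ × ℝ | ∃ i < n,
          p = (∑ k ∈ Finset.range i, m k, ∑ k ∈ Finset.range (i + 1), m k)}, Set.Ioo p.1 p.2) =
          ⋃ i ∈ Finset.range n,
            Set.Ioo (∑ k ∈ Finset.range i, m k) (∑ k ∈ Finset.range (i + 1), m k) := by
        ext z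
        simp only [Set.mem_iUnion, Set.mem_ofPred_eq, Finset.mem_range, exists_prop]
        constructor
        · rintro ⟨_, ⟨i, hi, rfl⟩, hz⟩
          exact ⟨i, hi, hz⟩
        · rintro ⟨i, hi, hz⟩
          exact ⟨_, ⟨i, hi, rfl⟩, hz⟩
      have hvol : volume (⋃ i ∈ Finset.range n,
          Set.Ioo (∑ k ∈ Finset.range i, m k) (∑ k ∈ Finset.range (i + 1), m k)) =
          ENNReal.ofReal (∑ k ∈ Finset.range n, m k) := by
        rw [measure_biUnion_finset, ENNReal.ofReal_sum_of_nonneg]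
        · simp [Finset.sum_range_succ]
        · intro i hi
          exact (hm i (by simpa using hi)).le
        · intro i hi j hj hij
          exact hdisj' i (by simpa using hi) j (by simpa using hj) hij
        · intro i _
          exact measurableSet_Ioo
      -- The union of the blocks has full measure in `[0, L]`, so its complement is null.
      rw [hU, measure_sdiff, hvol, Real.volume_Icc, sub_zero, tsub_self]
      · intro z hz
        simp only [Set.mem_iUnion, Finset.mem_range, exists_prop] at hz
        obtain ⟨i, hi, hz⟩ := hz
        have h1 := hmono 0 i (Nat.zero_le _) hi.le
        have h2 := hmono (i + 1) n hi le_rfl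
        simp only [Finset.range_zero, Finset.sum_empty] at h1
        exact ⟨h1.trans hz.1.le, hz.2.le.trans h2⟩
      · exact (Finset.measurableSet_biUnion _ (fun i _ => measurableSet_Ioo)).nullMeasurableSet
      · rw [hvol]
        exact ENNReal.ofReal_ne_top }

theorem dense_aux {a : ℝ} (ha : 0 < a) (ha' : a < 1) (β : IntervalPartition) {ε : ℝ}
    (hε : 0 < ε) : ∃ γ : IntervalPartition, HasDiversityProp a γ ∧ dHp β γ < ε := by
  obtain ⟨F, hF, hsum⟩ := exists_finset_mass β hε
  obtain ⟨n, b, hb, hs, hbs⟩ := exists_sorted β F hF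
  let m : ℕ → ℝ := fun i => if h : i < n then mass (b ⟨i, h⟩) else 0
  have hm_fin : ∀ j : Fin n, m j = mass (b j) := fun j => by simp [m]
  have hm : ∀ i < n, 0 < m i := by
    intro i hi
    have := β.blocks_lt _ (hb ⟨i, hi⟩)
    simp only [m, hi, dif_pos, mass]
    linarith
  have hmsum : ∑ k ∈ Finset.range n, m k = ∑ j, mass (b j) := by
    rw [Finset.sum_range]
    exact Finset.sum_congr rfl (fun j _ => hm_fin j)
  refine ⟨concat n m hm, hasDiversityProp_of_finite ha ha' _ ?_, ?_⟩
  · refine (Set.finite_range (fun j : Fin n =>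
      (∑ k ∈ Finset.range j, m k, ∑ k ∈ Finset.range (j + 1), m k))).subset ?_
    rintro _ ⟨i, hi, rfl⟩
    exact ⟨⟨i, hi⟩, rfl⟩
  · refine (dHp_le β (concat n m hm) (n := n) (c := fun j => (b j,
      (∑ k ∈ Finset.range j, m k, ∑ k ∈ Finset.range (j + 1), m k)))
      ⟨fun j => ⟨hb j, j, j.2, rfl⟩, fun j k h => ⟨hs j k h, ?_⟩⟩).trans_lt ?_
    · change ∑ k ∈ Finset.range (j + 1), m k ≤ ∑ i ∈ Finset.range k, m i
      refine Finset.sum_le_sum_of_subset_of_nonneg ?_ (fun i hi _ => (hm i ?_).le)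
      · simpa using h
      · exact (by simpa using hi : i < k).trans k.2
    · have hmass : ∀ j : Fin n, mass (∑ k ∈ Finset.range j, m k,
          ∑ k ∈ Finset.range (j + 1), m k) = mass (b j) := by
        intro j
        rw [← hm_fin]
        simp [mass, Finset.sum_range_succ]
      have hlen : (concat n m hm).length = ∑ j, mass (b j) := hmsum
      simp only [hausDistortion, hmass, hlen, sub_self, abs_zero, Finset.sum_const_zero, zero_add]
      exact max_lt (by linarith) hε

/-! ### Counting functions are Borel -/

noncomputable instance : TopologicalSpace IntervalPartition := dHpTopology
noncomputable instance : MeasurableSpace IntervalPartition := borel IntervalPartition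
instance : BorelSpace IntervalPartition := ⟨rfl⟩

/-- Matched blocks of a correspondence have right endpoints differing by at most the
distortion: what lies to the right of the second block is at least the matched mass there, and
what lies to the left of the first one is at least the matched mass there. -/
theorem right_endpoint_le {β γ : IntervalPartition} {n : ℕ} {c : Fin n → (ℝ × ℝ) × (ℝ × ℝ)}
    (hc : IsCorrespondence β γ n c) (j : Fin n) :
    (c j).2.2 ≤ (c j).1.2 + hausDistortion β γ n c := by
  have hb := fun j => (hc.1 j).1
  have hg := fun j => (hc.1 j).2
  have hbs := fun j k h => (hc.2 j k h).1
  have hgs := fun j k h => (hc.2 j k h).2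
  have h1 : ∑ i ∈ Finset.univ.filter (fun i => i ≤ j), mass (c i).1 ≤ (c j).1.2 - 0 := by
    refine sum_seq_le β hb hbs _ ?_ ?_
    · exact (β.blocks_sub _ (hb j)).1.trans (β.blocks_lt _ (hb j)).le
    · intro i hi
      refine ⟨(β.blocks_sub _ (hb i)).1, ?_⟩
      rcases (Finset.mem_filter.1 hi).2.lt_or_eq with h | h
      · exact (hbs i j h).trans (β.blocks_lt _ (hb j)).le
      · rw [h]
  have h2 : ∑ i ∈ Finset.univ.filter (fun i => ¬ i ≤ j), mass (c i).2 ≤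
      γ.length - (c j).2.2 := by
    refine sum_seq_le γ hg hgs _ (γ.blocks_sub _ (hg j)).2 ?_
    intro i hi
    exact ⟨hgs j i (not_le.1 (Finset.mem_filter.1 hi).2), (γ.blocks_sub _ (hg i)).2⟩
  have h3 : ∑ i ∈ Finset.univ.filter (fun i => i ≤ j), (mass (c i).2 - mass (c i).1) ≤
      ∑ i, |mass (c i).1 - mass (c i).2| := by
    refine (Finset.sum_le_sum (g := fun i => |mass (c i).1 - mass (c i).2|) ?_).trans ?_
    · intro i _
      rw [abs_sub_comm]
      exact le_abs_self _
    · exact Finset.sum_le_sum_of_subset_of_nonneg (Finset.filter_subset _ _)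
        (fun _ _ _ => abs_nonneg _)
  rw [Finset.sum_sub_distrib] at h3
  have h4 := Finset.sum_filter_add_sum_filter_not Finset.univ (fun i => i ≤ j)
    (fun i => mass (c i).2)
  have h5 : (∑ j : Fin n, |mass (c j).1 - mass (c j).2|) + γ.length - ∑ j : Fin n, mass (c j).2 ≤
    hausDistortion β γ n c := le_max_right _ _
  linarith

/-- A block larger than the distortion is matched. -/
theorem exists_match {β γ : IntervalPartition} {n : ℕ} {c : Fin n → (ℝ × ℝ) × (ℝ × ℝ)}
    (hc : IsCorrespondence β γ n c) {p : ℝ × ℝ} (hp : p ∈ β.blocks)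
    (hlt : hausDistortion β γ n c < mass p) : ∃ j, (c j).1 = p := by
  classical
  by_contra! hne
  have hinj := seq_injective β (fun j => (hc.1 j).1) (fun j k h => (hc.2 j k h).1)
  have h1 := sum_mass_le β (insert p (Finset.univ.image (fun j => (c j).1))) (by
      intro q hq
      rcases Finset.mem_insert.1 hq with rfl | hq
      · exact hp
      · obtain ⟨j, _, rfl⟩ := Finset.mem_image.1 hq
        exact (hc.1 j).1) β.length_nonneg (by
      intro q hq
      rcases Finset.mem_insert.1 hq with rfl | hq
      · exact β.blocks_sub _ hp
      · obtain ⟨j, _, rfl⟩ := Finset.mem_image.1 hq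
        exact β.blocks_sub _ (hc.1 j).1)
  rw [Finset.sum_insert (by simpa using hne),
    Finset.sum_image (fun j _ k _ hjk => hinj hjk)] at h1
  have h2 : (∑ j : Fin n, |mass (c j).1 - mass (c j).2|) + β.length - ∑ j : Fin n, mass (c j).1 ≤
    hausDistortion β γ n c := le_max_left _ _
  have h3 : 0 ≤ ∑ j : Fin n, |mass (c j).1 - mass (c j).2| :=
    Finset.sum_nonneg (fun _ _ => abs_nonneg _)
  linarith

theorem abs_mass_sub_le {β γ : IntervalPartition} {n : ℕ} {c : Fin n → (ℝ × ℝ) × (ℝ × ℝ)}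
    (hc : IsCorrespondence β γ n c) (j : Fin n) :
    |mass (c j).1 - mass (c j).2| ≤ hausDistortion β γ n c := by
  have h1 := sum_seq_le_length β (fun j => (hc.1 j).1) (fun j k h => (hc.2 j k h).1)
  have h2 : (∑ j : Fin n, |mass (c j).1 - mass (c j).2|) + β.length - ∑ j : Fin n, mass (c j).1 ≤
    hausDistortion β γ n c := le_max_left _ _
  have h3 := Finset.single_le_sum (f := fun j => |mass (c j).1 - mass (c j).2|)
    (fun _ _ => abs_nonneg _) (Finset.mem_univ j)
  linarith

/-- Having at least `k` blocks of mass `> h` that end strictly before `t` is an open condition: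
such blocks persist, up to a small change of mass and position, under a small `dHp`-change. -/
theorem isOpen_count {h : ℝ} (hh : 0 < h) (t : ℝ) (k : ℕ) :
    IsOpen {β : IntervalPartition |
      k ≤ Set.ncard {p : ℝ × ℝ | p ∈ β.blocks ∧ h < p.2 - p.1 ∧ p.2 < t}} := by
  rw [isOpen_iff_forall_mem_open]
  intro β hβ
  have hfin : {p : ℝ × ℝ | p ∈ β.blocks ∧ h < p.2 - p.1 ∧ p.2 < t}.Finite :=
    (finite_large β hh).subset (fun p hp => ⟨hp.1, hp.2.1⟩)
  have hev : ∀ᶠ η in 𝓝[>] (0 : ℝ), ∀ p ∈ {p : ℝ × ℝ | p ∈ β.blocks ∧ h < p.2 - p.1 ∧ p.2 < t},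
      η < p.2 - p.1 - h ∧ η < t - p.2 := by
    refine (Filter.eventually_all_finite hfin).2 (fun p hp => ?_)
    refine Filter.Eventually.filter_mono nhdsWithin_le_nhds ?_
    exact (eventually_lt_nhds (by linarith [hp.2.1])).and (eventually_lt_nhds (by linarith [hp.2.2]))
  obtain ⟨η, hη, hη0⟩ := (hev.and self_mem_nhdsWithin).exists
  have hη0 : 0 < η := hη0
  refine ⟨{γ | dHp β γ < min η h}, ?_, ?_, dHp_self_lt β (lt_min hη0 hh)⟩
  swap
  · exact TopologicalSpace.isOpen_generateFrom_of_mem ⟨β, _, rfl⟩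
  intro γ hγ
  obtain ⟨n, c, hc, hlt⟩ := exists_of_dHp_lt hγ
  have hltη := hlt.trans_le (min_le_left _ _)
  have hlth := hlt.trans_le (min_le_right _ _)
  let J : Set (Fin n) :=
    {j | (c j).1 ∈ {p : ℝ × ℝ | p ∈ β.blocks ∧ h < p.2 - p.1 ∧ p.2 < t}}
  have h1 : Set.ncard {p : ℝ × ℝ | p ∈ β.blocks ∧ h < p.2 - p.1 ∧ p.2 < t} ≤ J.ncard := by
    refine (Set.ncard_le_ncard (t := (fun j => (c j).1) '' J) ?_ (Set.toFinite _)).trans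
      (Set.ncard_image_le (Set.toFinite _))
    intro p hp
    obtain ⟨j, rfl⟩ := exists_match hc hp.1 (hlth.trans hp.2.1)
    exact ⟨j, hp, rfl⟩
  have h2 : J.ncard ≤ Set.ncard {p : ℝ × ℝ | p ∈ γ.blocks ∧ h < p.2 - p.1 ∧ p.2 < t} := by
    refine Set.ncard_le_ncard_of_injOn (fun j => (c j).2) ?_ ?_
      ((finite_large γ hh).subset (fun p hp => ⟨hp.1, hp.2.1⟩))
    · intro j hj
      have h3 := hη _ hj
      have h4 := (abs_le.1 (abs_mass_sub_le hc j)).2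
      have h5 := right_endpoint_le hc j
      simp only [mass] at h4
      exact ⟨(hc.1 j).2, by linarith, by linarith⟩
    · exact (seq_injective γ (fun j => (hc.1 j).2) (fun j k h => (hc.2 j k h).2)).injOn
  exact (show k ≤ _ from hβ).trans (h1.trans h2)

theorem divCount_mono (β : IntervalPartition) {h : ℝ} (hh : 0 < h) {s t : ℝ} (hst : s ≤ t) :
    divCount β s h ≤ divCount β t h :=
  Set.ncard_le_ncard (fun _ hp => ⟨hp.1, hp.2.1, hp.2.2.trans hst⟩)
    ((finite_large β hh).subset (fun _ hp => ⟨hp.1, hp.2.1⟩))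

/-- For `h > 0` there are finitely many blocks of mass `> h`, hence no right endpoint of one of
them lies in `(t, s)` for `s` close to `t`. -/
theorem eventually_blocks_eq (β : IntervalPartition) {h : ℝ} (hh : 0 < h) (t : ℝ) :
    ∀ᶠ s in 𝓝[>] t, ∀ p ∈ {p : ℝ × ℝ | p ∈ β.blocks ∧ h < p.2 - p.1}, p.2 ≤ s → p.2 ≤ t := by
  refine (Filter.eventually_all_finite (finite_large β hh)).2 (fun p _ => ?_)
  rcases le_or_gt p.2 t with hpt | hpt
  · exact Filter.Eventually.of_forall (fun _ _ => hpt)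
  · filter_upwards [nhdsWithin_le_nhds (eventually_lt_nhds hpt)] with s hs h'
    exact absurd h' (not_le.2 hs)

theorem eventually_divCount_eq (β : IntervalPartition) {h : ℝ} (hh : 0 < h) (t : ℝ) :
    ∀ᶠ s in 𝓝[>] t, divCount β s h = divCount β t h := by
  filter_upwards [eventually_blocks_eq β hh t, self_mem_nhdsWithin] with s hs hts
  refine le_antisymm ?_ (divCount_mono β hh (le_of_lt hts))
  exact Set.ncard_le_ncard (fun p hp => ⟨hp.1, hp.2.1, hs p ⟨hp.1, hp.2.1⟩ hp.2.2⟩)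
    ((finite_large β hh).subset (fun _ hp => ⟨hp.1, hp.2.1⟩))

theorem eventually_divCount_eq_size (β : IntervalPartition) {h : ℝ} (hh : 0 < h) (t : ℝ) :
    ∀ᶠ h' in 𝓝[>] h, divCount β t h' = divCount β t h := by
  have h1 : ∀ᶠ h' in 𝓝[>] h, ∀ p ∈ {p : ℝ × ℝ | p ∈ β.blocks ∧ h < p.2 - p.1},
      h' < p.2 - p.1 :=
    (Filter.eventually_all_finite (finite_large β hh)).2
      (fun p hp => nhdsWithin_le_nhds (eventually_lt_nhds hp.2))
  filter_upwards [h1, self_mem_nhdsWithin] with h' h1 hlt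
  have hlt : h < h' := hlt
  unfold divCount
  congr 1
  ext p
  exact ⟨fun hp => ⟨hp.1, hlt.trans hp.2.1, hp.2.2⟩,
    fun hp => ⟨hp.1, h1 p ⟨hp.1, hp.2.1⟩, hp.2.2⟩⟩

theorem measurable_divCount {h : ℝ} (hh : 0 < h) (t : ℝ) :
    Measurable (fun β : IntervalPartition => divCount β t h) := by
  refine measurable_of_Ici (fun k => ?_)
  have heq : (fun β : IntervalPartition => divCount β t h) ⁻¹' Set.Ici k =
      ⋂ m : ℕ, {β : IntervalPartition | k ≤ Set.ncard
        {p : ℝ × ℝ | p ∈ β.blocks ∧ h < p.2 - p.1 ∧ p.2 < t + 1 / ((m : ℝ) + 1)}} := by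
    ext β
    simp only [Set.mem_preimage, Set.mem_Ici, Set.mem_iInter, Set.mem_ofPred_eq]
    constructor
    · intro hk m
      have : (0 : ℝ) < 1 / ((m : ℝ) + 1) := by positivity
      exact hk.trans (Set.ncard_le_ncard (fun p hp => ⟨hp.1, hp.2.1, by linarith [hp.2.2]⟩)
        ((finite_large β hh).subset (fun _ hp => ⟨hp.1, hp.2.1⟩)))
    · intro hk
      have hseq : Tendsto (fun m : ℕ => t + 1 / ((m : ℝ) + 1)) atTop (𝓝[>] t) := by
        refine tendsto_nhdsWithin_iff.2 ⟨?_, Filter.Eventually.of_forall (fun m => ?_)⟩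
        · simpa using tendsto_one_div_add_atTop_nhds_zero_nat.const_add t
        · have : (0 : ℝ) < 1 / ((m : ℝ) + 1) := by positivity
          exact Set.mem_Ioi.2 (by linarith)
      obtain ⟨m, hm⟩ := (hseq.eventually (eventually_divCount_eq β hh t)).exists
      rw [← hm]
      exact (hk m).trans (Set.ncard_le_ncard (fun p hp => ⟨hp.1, hp.2.1, hp.2.2.le⟩)
        ((finite_large β hh).subset (fun _ hp => ⟨hp.1, hp.2.1⟩)))
  rw [heq]
  exact MeasurableSet.iInter (fun m => (isOpen_count hh _ k).measurableSet)

/-! ### Reduction of the diversity property to countably many limits -/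

/-- The filter of positive rationals tending to `0`. -/
noncomputable def ratZero : Filter {q : ℚ // 0 < q} :=
  comap (fun q => ((q : ℚ) : ℝ)) (𝓝[>] (0 : ℝ))

instance : ratZero.IsCountablyGenerated := by
  unfold ratZero; infer_instance

/-- The renormalised count `Γ(1-a) h^a #{blocks of mass > h ending at or before t}`, whose limit
as `h ↓ 0` is the diversity at `t`. -/
noncomputable def scaled (a : ℝ) (β : IntervalPartition) (t h : ℝ) : ℝ :=
  Real.Gamma (1 - a) * h ^ a * (divCount β t h : ℝ)

/-- The diversity at `t`, encoded as a liminf along `h = 1/(n+1)` to make it Borel in `β` for all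
partitions. It is meaningful only where the limit exists. -/
noncomputable def divLim (a : ℝ) (β : IntervalPartition) (t : ℝ) : ℝ :=
  liminf (fun n : ℕ => scaled a β t (1 / ((n : ℝ) + 1))) atTop

/-- The number of blocks of mass `> h` ending at or before the point `t` where the diversity, as
a function of rational times, crosses the level `c`; by right-continuity it is an infimum over
rational times at level at least `c`. It is `0` if the level is never reached. -/
noncomputable def levelCount (a : ℝ) (β : IntervalPartition) (c h : ℝ) : ℝ :=
  (⨅ r : ℚ, if c ≤ divLim a β r then (divCount β r h : ENNReal) else ⊤).toReal

theorem scaled_mono {a : ℝ} (ha' : a < 1) (β : IntervalPartition) {h : ℝ}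
    (hh : 0 < h) {s t : ℝ} (hst : s ≤ t) : scaled a β s h ≤ scaled a β t h := by
  have hΓ : 0 < Real.Gamma (1 - a) := Real.Gamma_pos_of_pos (by linarith)
  have := divCount_mono β hh hst
  unfold scaled
  gcongr

theorem measurable_scaled (a : ℝ) {h : ℝ} (hh : 0 < h) (t : ℝ) :
    Measurable (fun β : IntervalPartition => scaled a β t h) :=
  ((measurable_from_top (f := fun n : ℕ => (n : ℝ))).comp (measurable_divCount hh t)).const_mul _

theorem measurable_divLim (a : ℝ) (t : ℝ) :
    Measurable (fun β : IntervalPartition => divLim a β t) :=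
  Measurable.liminf (fun n => measurable_scaled a (by positivity) t)

theorem measurable_levelCount (a c : ℝ) {h : ℝ} (hh : 0 < h) :
    Measurable (fun β : IntervalPartition => levelCount a β c h) := by
  refine Measurable.ennreal_toReal (Measurable.iInf (fun r => ?_))
  refine Measurable.ite (measurableSet_le measurable_const (measurable_divLim a r)) ?_
    measurable_const
  exact (measurable_from_top (f := fun n : ℕ => (n : ENNReal))).comp (measurable_divCount hh r)

theorem tendsto_ratZero : Tendsto (fun q : {q : ℚ // 0 < q} => ((q : ℚ) : ℝ)) ratZero (𝓝[>] 0) :=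
  tendsto_comap

theorem tendsto_inv_nat : Tendsto (fun n : ℕ => 1 / ((n : ℝ) + 1)) atTop (𝓝[>] 0) :=
  tendsto_nhdsWithin_iff.2 ⟨tendsto_one_div_add_atTop_nhds_zero_nat,
    Filter.Eventually.of_forall (fun _ => Set.mem_Ioi.2 (by positivity))⟩

theorem divLim_eq {a : ℝ} {β : IntervalPartition} {t d : ℝ}
    (h : Tendsto (scaled a β t) (𝓝[>] 0) (𝓝 d)) : divLim a β t = d :=
  (h.comp tendsto_inv_nat).liminf_eq

/-- The renormalised count is right-continuous in `h`, so its limit at `0` may be tested along the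
rationals. -/
theorem tendsto_of_rat {a : ℝ} {β : IntervalPartition} {t d : ℝ}
    (h : Tendsto (fun q : {q : ℚ // 0 < q} => scaled a β t q) ratZero (𝓝 d)) :
    Tendsto (scaled a β t) (𝓝[>] 0) (𝓝 d) := by
  refine (closed_nhds_basis d).tendsto_right_iff.2 ?_
  rintro K ⟨hK, hKc⟩
  have h1 : ∀ᶠ x : ℝ in 𝓝[>] 0, ∀ q : {q : ℚ // 0 < q}, ((q : ℚ) : ℝ) = x →
      scaled a β t q ∈ K := by
    exact Filter.eventually_comap.1 (h hK)
  obtain ⟨δ, hδ, hδK⟩ := mem_nhdsGT_iff_exists_Ioo_subset.1 h1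
  filter_upwards [Ioo_mem_nhdsGT hδ] with x hx
  have hcont : Tendsto (scaled a β t) (𝓝[>] x) (𝓝 (scaled a β t x)) := by
    have h2 : Tendsto (fun y : ℝ => Real.Gamma (1 - a) * y ^ a * (divCount β t x : ℝ)) (𝓝[>] x)
        (𝓝 (scaled a β t x)) := by
      have := (Real.continuousAt_rpow_const x a (Or.inl hx.1.ne')).tendsto
      exact ((this.mono_left nhdsWithin_le_nhds).const_mul _).mul_const _
    refine h2.congr' ?_
    filter_upwards [eventually_divCount_eq_size β hx.1 t] with y hy
    simp only [scaled, hy]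
  refine hKc.mem_of_frequently_of_tendsto ?_ hcont
  rw [Filter.frequently_iff]
  intro U hU
  obtain ⟨u, hu, huU⟩ := mem_nhdsGT_iff_exists_Ioo_subset.1 hU
  obtain ⟨q, hq1, hq2⟩ := exists_rat_btwn (lt_min hu hx.2)
  have hq0 : (0 : ℝ) < q := lt_trans hx.1 hq1
  refine ⟨q, huU ⟨hq1, hq2.trans_le (min_le_left _ _)⟩, ?_⟩
  exact hδK ⟨hq0, hq2.trans_le (min_le_right _ _)⟩ ⟨q, by exact_mod_cast hq0⟩ rfl

/-- If the rational times of level at least `c` are those beyond `t` (with or without `t`), then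
the level is crossed at `t`. -/
theorem levelCount_eq {a : ℝ} {β : IntervalPartition} {c t h : ℝ} (hh : 0 < h)
    (h1 : ∀ r : ℚ, c ≤ divLim a β r → t ≤ r) (h2 : ∀ r : ℚ, t < r → c ≤ divLim a β r) :
    levelCount a β c h = divCount β t h := by
  have : (⨅ r : ℚ, if c ≤ divLim a β r then (divCount β r h : ENNReal) else ⊤) =
      (divCount β t h : ENNReal) := by
    apply le_antisymm
    · obtain ⟨u, hu, huU⟩ := mem_nhdsGT_iff_exists_Ioo_subset.1 (eventually_divCount_eq β hh t)
      obtain ⟨q, hq1, hq2⟩ := exists_rat_btwn (Set.mem_Ioi.1 hu)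
      refine (iInf_le _ q).trans ?_
      rw [if_pos (h2 q hq1)]
      exact le_of_eq (congrArg _ (huU ⟨hq1, hq2⟩))
    · refine le_iInf (fun r => ?_)
      split_ifs with hr
      · exact_mod_cast divCount_mono β hh (h1 r hr)
      · exact le_top
  rw [levelCount, this]
  simp

theorem exists_tendsto_real {a : ℝ} {β : IntervalPartition} (hβ : HasDiversityProp a β) (t : ℝ) :
    ∃ d, Tendsto (scaled a β t) (𝓝[>] 0) (𝓝 d) := by
  rcases lt_or_ge t 0 with ht | ht
  · refine ⟨0, tendsto_const_nhds.congr (fun h => ?_)⟩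
    have : {p : ℝ × ℝ | p ∈ β.blocks ∧ h < p.2 - p.1 ∧ p.2 ≤ t} = ∅ := by
      ext p
      simp only [Set.mem_ofPred_eq, Set.mem_empty_iff_false, iff_false]
      rintro ⟨hp, _, hpt⟩
      linarith [β.blocks_lt p hp, (β.blocks_sub p hp).1]
    simp [scaled, divCount, this]
  rcases le_or_gt t β.length with htL | htL
  · exact hβ t ⟨ht, htL⟩
  · obtain ⟨d, hd⟩ := hβ β.length ⟨β.length_nonneg, le_rfl⟩
    refine ⟨d, hd.congr (fun h => ?_)⟩
    have : {p : ℝ × ℝ | p ∈ β.blocks ∧ h < p.2 - p.1 ∧ p.2 ≤ t} =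
        {p : ℝ × ℝ | p ∈ β.blocks ∧ h < p.2 - p.1 ∧ p.2 ≤ β.length} := by
      ext p
      exact ⟨fun hp => ⟨hp.1, hp.2.1, (β.blocks_sub p hp.1).2⟩,
        fun hp => ⟨hp.1, hp.2.1, hp.2.2.trans htL.le⟩⟩
    simp [scaled, divCount, this]

theorem divLim_mono {a : ℝ} (ha' : a < 1) {β : IntervalPartition} {s t d e : ℝ}
    (hs : Tendsto (scaled a β s) (𝓝[>] 0) (𝓝 d)) (ht : Tendsto (scaled a β t) (𝓝[>] 0) (𝓝 e))
    (hst : s ≤ t) : divLim a β s ≤ divLim a β t := by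
  rw [divLim_eq hs, divLim_eq ht]
  refine le_of_tendsto_of_tendsto hs ht ?_
  filter_upwards [self_mem_nhdsWithin] with h hh
  exact scaled_mono ha' β hh hst

theorem levelCount_zero {a : ℝ} {β : IntervalPartition} {c h : ℝ} {r : ℚ}
    (hr : c ≤ divLim a β r) (hr0 : r ≤ 0) : levelCount a β c h = 0 := by
  have h1 : divCount β r h = 0 := by
    have : {p : ℝ × ℝ | p ∈ β.blocks ∧ h < p.2 - p.1 ∧ p.2 ≤ r} = ∅ := by
      ext p
      simp only [Set.mem_ofPred_eq, Set.mem_empty_iff_false, iff_false]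
      rintro ⟨hp, _, hpt⟩
      have : (r : ℝ) ≤ 0 := by exact_mod_cast hr0
      linarith [β.blocks_lt p hp, (β.blocks_sub p hp).1]
    simp [divCount, this]
  have h2 : (⨅ r : ℚ, if c ≤ divLim a β r then (divCount β r h : ENNReal) else ⊤) = 0 := by
    refine le_antisymm ((iInf_le _ r).trans ?_) bot_le
    rw [if_pos hr, h1]
    simp
  rw [levelCount, h2]
  simp

/-- Under the diversity property, the count at any level-crossing point is either identically `0`
or a count at a fixed time, so its renormalisation converges. -/
theorem exists_tendsto_level {a : ℝ} (ha' : a < 1) {β : IntervalPartition}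
    (hβ : HasDiversityProp a β) (c : ℝ) :
    ∃ d, Tendsto (fun q : {q : ℚ // 0 < q} =>
      Real.Gamma (1 - a) * ((q : ℚ) : ℝ) ^ a * levelCount a β c q) ratZero (𝓝 d) := by
  by_cases hemp : ∃ r : ℚ, c ≤ divLim a β r
  swap
  · push Not at hemp
    refine ⟨0, tendsto_const_nhds.congr (fun q => ?_)⟩
    have : ∀ r : ℚ, ¬ (c ≤ divLim a β r) := fun r => not_le.2 (hemp r)
    simp [levelCount, this]
  by_cases hneg : ∃ r : ℚ, c ≤ divLim a β r ∧ r ≤ 0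
  · obtain ⟨r, hr, hr0⟩ := hneg
    refine ⟨0, tendsto_const_nhds.congr (fun q => ?_)⟩
    rw [levelCount_zero hr hr0, mul_zero]
  push Not at hneg
  let S : Set ℝ := {x | ∃ r : ℚ, c ≤ divLim a β r ∧ x = r}
  have hbdd : BddBelow S := by
    refine ⟨0, ?_⟩
    rintro _ ⟨r, hr, rfl⟩
    exact_mod_cast (hneg r hr).le
  have hne : S.Nonempty := hemp.elim fun r hr => ⟨_, r, hr, rfl⟩
  obtain ⟨d, hd⟩ := exists_tendsto_real hβ (sInf S)
  refine ⟨d, (hd.comp tendsto_ratZero).congr (fun q => ?_)⟩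
  have hq : (0 : ℝ) < (q : ℚ) := by exact_mod_cast q.2
  rw [levelCount_eq (t := sInf S) hq]
  · rfl
  · intro r hr
    exact csInf_le hbdd ⟨r, hr, rfl⟩
  · intro r hr
    obtain ⟨_, ⟨s, hs, rfl⟩, hsr⟩ := exists_lt_of_csInf_lt hne hr
    obtain ⟨_, h1⟩ := exists_tendsto_real hβ s
    obtain ⟨_, h2⟩ := exists_tendsto_real hβ r
    exact hs.trans (divLim_mono ha' h1 h2 hsr.le)

/-- Convergence at rational times and at level-crossing points gives convergence everywhere: a
time at which the limit function does not jump is handled by monotonicity, and a jump skips a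
rational level, hence is a level-crossing point. -/
theorem hasDiversityProp_of_countable {a : ℝ} (ha' : a < 1) {β : IntervalPartition}
    (h1 : ∀ r : ℚ, ∃ d, Tendsto (fun q : {q : ℚ // 0 < q} => scaled a β r q) ratZero (𝓝 d))
    (h2 : ∀ c : ℚ, ∃ d, Tendsto (fun q : {q : ℚ // 0 < q} =>
      Real.Gamma (1 - a) * ((q : ℚ) : ℝ) ^ a * levelCount a β c q) ratZero (𝓝 d)) :
    HasDiversityProp a β := by
  have hF : ∀ r : ℚ, Tendsto (scaled a β r) (𝓝[>] 0) (𝓝 (divLim a β r)) := by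
    intro r
    obtain ⟨d, hd⟩ := h1 r
    have := tendsto_of_rat hd
    rwa [divLim_eq this]
  have hmono : ∀ r s : ℚ, (r : ℝ) ≤ s → divLim a β r ≤ divLim a β s :=
    fun r s hrs => divLim_mono ha' (hF r) (hF s) hrs
  intro t _
  by_cases htr : ∃ r : ℚ, (r : ℝ) = t
  · obtain ⟨r, rfl⟩ := htr
    exact ⟨_, hF r⟩
  push Not at htr
  let A : Set ℝ := {x | ∃ r : ℚ, (r : ℝ) < t ∧ x = divLim a β r}
  let B : Set ℝ := {x | ∃ r : ℚ, t < (r : ℝ) ∧ x = divLim a β r}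
  have hAne : A.Nonempty := by
    obtain ⟨r, hr⟩ := exists_rat_lt t
    exact ⟨_, r, hr, rfl⟩
  have hBne : B.Nonempty := by
    obtain ⟨r, hr⟩ := exists_rat_gt t
    exact ⟨_, r, hr, rfl⟩
  have hAB : ∀ x ∈ A, ∀ y ∈ B, x ≤ y := by
    rintro _ ⟨r, hr, rfl⟩ _ ⟨s, hs, rfl⟩
    exact hmono r s (hr.trans hs).le
  have hAb : BddAbove A := hBne.imp fun y hy x hx => hAB x hx y hy
  have hBb : BddBelow B := hAne.imp fun x hx y hy => hAB x hx y hy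
  rcases lt_or_ge (sSup A) (sInf B) with hjump | hnojump
  · obtain ⟨c, hc1, hc2⟩ := exists_rat_btwn hjump
    obtain ⟨d, hd⟩ := h2 c
    refine ⟨d, tendsto_of_rat (hd.congr (fun q => ?_))⟩
    have hq : (0 : ℝ) < (q : ℚ) := by exact_mod_cast q.2
    rw [levelCount_eq (t := t) hq]
    · rfl
    · intro r hr
      by_contra! hrt
      linarith [le_csSup hAb ⟨r, hrt, rfl⟩]
    · intro r hr
      exact hc2.le.trans (csInf_le hBb ⟨r, hr, rfl⟩)
  · refine ⟨sSup A, ?_⟩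
    change Tendsto (scaled a β t) (𝓝[>] 0) (𝓝 (sSup A))
    rw [tendsto_order]
    constructor
    · intro x hx
      obtain ⟨_, ⟨r, hr, rfl⟩, hxr⟩ := exists_lt_of_lt_csSup hAne hx
      filter_upwards [(hF r).eventually (lt_mem_nhds hxr), self_mem_nhdsWithin] with h hlt hh
      exact hlt.trans_le (scaled_mono ha' β hh hr.le)
    · intro x hx
      obtain ⟨_, ⟨r, hr, rfl⟩, hxr⟩ := exists_lt_of_csInf_lt hBne (hnojump.trans_lt hx)
      filter_upwards [(hF r).eventually (gt_mem_nhds hxr), self_mem_nhdsWithin] with h hlt hh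
      exact (scaled_mono ha' β hh hr.le).trans_lt hlt

theorem measurableSet_hasDiversityProp {a : ℝ} (ha' : a < 1) :
    MeasurableSet {β : IntervalPartition | HasDiversityProp a β} := by
  have heq : {β : IntervalPartition | HasDiversityProp a β} =
      (⋂ r : ℚ, {β | ∃ d, Tendsto (fun q : {q : ℚ // 0 < q} => scaled a β r q) ratZero (𝓝 d)}) ∩
      ⋂ c : ℚ, {β | ∃ d, Tendsto (fun q : {q : ℚ // 0 < q} =>
        Real.Gamma (1 - a) * ((q : ℚ) : ℝ) ^ a * levelCount a β c q) ratZero (𝓝 d)} := by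
    ext β
    simp only [Set.mem_inter_iff, Set.mem_iInter, Set.mem_ofPred_eq]
    constructor
    · intro hβ
      refine ⟨fun r => ?_, fun c => exists_tendsto_level ha' hβ c⟩
      obtain ⟨d, hd⟩ := exists_tendsto_real hβ r
      exact ⟨d, hd.comp tendsto_ratZero⟩
    · rintro ⟨h1, h2⟩
      exact hasDiversityProp_of_countable ha' h1 h2
  rw [heq]
  refine (MeasurableSet.iInter fun r => ?_).inter (MeasurableSet.iInter fun c => ?_)
  · exact measurableSet_exists_tendsto
      (fun q => measurable_scaled a (by exact_mod_cast q.2) r)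
  · exact measurableSet_exists_tendsto
      (fun q => (measurable_levelCount a c (by exact_mod_cast q.2)).const_mul _)

end IntervalPartition

open IntervalPartition in
/-- `I_α` is a Borel subset of `(I_H, d_H')` and is dense in
`(I_H, d_H')`. -/
theorem Ia_borel_dense (a : ℝ) (ha : 0 < a) (ha' : a < 1) :
    @MeasurableSet IntervalPartition (@borel IntervalPartition dHpTopology)
      {β : IntervalPartition | HasDiversityProp a β} ∧
    (∀ β : IntervalPartition, ∀ ε : ℝ, 0 < ε →
      ∃ γ : IntervalPartition, HasDiversityProp a γ ∧ dHp β γ < ε) := by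
  exact ⟨measurableSet_hasDiversityProp ha', fun β _ hε => dense_aux ha ha' β hε⟩
end

section
/- The total diversity map β ↦ 𝒟_β(∞) is not continuous on I_α with respect to d_H: if β∈I_α satisfies 𝒟_β(∞)>0 and t↦𝒟_β(t) is continuous on [0,‖β‖], and β_n denotes the interval partition obtained from β by deleting all but the n largest blocks (ties broken by left-to-right order) and sliding the retained blocks together so that they abut, then d_H(β_n, β) → 0 as n→∞, while 𝒟_{β_n}(∞) = 0 for every n, so 𝒟_{β_n}(∞) does not converge to 𝒟_β(∞). -/
/-!
Let `U` be the union of the `n` largest blocks and `V x = Leb (U ∩ (-∞, x])` (`slideMap`). On `[0, L]`,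
where `L` is the length of `β`, the map `V` is the sliding map: it sends the left endpoint of a
retained block to its offset in `γ n`, moves retained blocks isometrically and collapses the
deleted ones. Consequently `V` maps the complement of `β` onto the complement of `γ n`
(`slideMap_mem_cset`, `exists_slideMap_eq`). Since `0 ≤ x - V x ≤ L - V L` on `[0, L]`, the Hausdorff distance
is at most the deleted mass `L - V L` (`dH_le`).

The deleted mass tends to zero because every fixed block is eventually among the `n` largest: if
`p` is missing, then `n` disjoint blocks of mass at least `mass p` fit into `[0, L]`
(`eventually_mem`); a finite family of blocks carrying almost all the mass is thus eventually
retained. Finally `γ n` has finitely many blocks, so its diversity vanishes identically.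
-/

open MeasureTheory Filter Topology Set

open IntervalPartition in
/-- `A` is the set of the `n` largest blocks of `β`, with ties broken by
left-to-right order. -/
def IsNLargest (β : IntervalPartition) (n : ℕ) (A : Set (ℝ × ℝ)) : Prop :=
  A ⊆ β.blocks ∧ A.Finite ∧ A.ncard = n ∧
  ∀ p ∈ A, ∀ q ∈ β.blocks, q ∉ A →
    mass q < mass p ∨ (mass q = mass p ∧ p.2 ≤ q.1)

open IntervalPartition in
/-- The total mass of the blocks of `A` lying to the left of the block `p`. -/
noncomputable def slideOffset (A : Set (ℝ × ℝ)) (p : ℝ × ℝ) : ℝ :=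
  ∑' q : {q : ℝ × ℝ // q ∈ A ∧ q.2 ≤ p.1}, mass q.val

open IntervalPartition in
/-- `γ` is obtained from the blocks of `A` by sliding them together so that
they abut, keeping their left-to-right order. -/
def IsSlide (A : Set (ℝ × ℝ)) (γ : IntervalPartition) : Prop :=
  γ.blocks = (fun p : ℝ × ℝ => (slideOffset A p, slideOffset A p + mass p)) '' A ∧
  γ.length = ∑' q : A, mass q.val

namespace IntervalPartition

/-! ### Unions of blocks -/

/-- The union of the open intervals encoded by `B`. -/
def blockUnion (B : Set (ℝ × ℝ)) : Set ℝ := ⋃ p ∈ B, Set.Ioo p.1 p.2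

/-- The mass of the blocks of `B` on the left of `x`, as a function of the position `x`. -/
noncomputable def slideMap (B : Set (ℝ × ℝ)) (x : ℝ) : ℝ :=
  volume.real (Set.Iic x ∩ blockUnion B)

theorem mem_blockUnion {B : Set (ℝ × ℝ)} {x : ℝ} :
    x ∈ blockUnion B ↔ ∃ p ∈ B, p.1 < x ∧ x < p.2 := by
  simp only [blockUnion, Set.mem_iUnion, Set.mem_Ioo, exists_prop]

theorem measurableSet_blockUnion (B : Set (ℝ × ℝ)) : MeasurableSet (blockUnion B) :=
  (isOpen_biUnion fun _ _ => isOpen_Ioo).measurableSet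

theorem blockUnion_subset (β : IntervalPartition) {B : Set (ℝ × ℝ)} (hB : B ⊆ β.blocks) :
    blockUnion B ⊆ Set.Ioo 0 β.length := by
  intro x hx
  obtain ⟨p, hp, h1, h2⟩ := mem_blockUnion.1 hx
  obtain ⟨h3, h4⟩ := β.blocks_sub p (hB hp)
  exact ⟨by linarith, by linarith⟩

theorem le_or_le (β : IntervalPartition) {p q : ℝ × ℝ} (hp : p ∈ β.blocks) (hq : q ∈ β.blocks)
    (hpq : p ≠ q) : p.2 ≤ q.1 ∨ q.2 ≤ p.1 := by
  by_contra! h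
  have h1 := β.blocks_lt p hp
  have h2 := β.blocks_lt q hq
  obtain ⟨x, hx1, hx2⟩ := exists_between
    (show max p.1 q.1 < min p.2 q.2 by simp [h1, h2, h.1, h.2])
  have hd := β.blocks_disjoint p hp q hq hpq
  have : x ∈ Set.Ioo p.1 p.2 ∩ Set.Ioo q.1 q.2 := by
    simp only [max_lt_iff, lt_min_iff] at hx1 hx2
    exact ⟨⟨hx1.1, hx2.1⟩, hx1.2, hx2.2⟩
  rw [hd] at this
  exact this

theorem pairwiseDisjoint_blocks (β : IntervalPartition) :
    β.blocks.PairwiseDisjoint fun p => Set.Ioo p.1 p.2 :=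
  fun p hp q hq hpq => Set.disjoint_iff_inter_eq_empty.2 (β.blocks_disjoint p hp q hq hpq)

theorem measureReal_blockUnion (β : IntervalPartition) {B : Set (ℝ × ℝ)} (hB : B ⊆ β.blocks)
    (hf : B.Finite) : volume.real (blockUnion B) = ∑' q : B, mass q.val := by
  lift B to Finset (ℝ × ℝ) using hf
  have h : blockUnion (B : Set (ℝ × ℝ)) = ⋃ p ∈ B, Set.Ioo p.1 p.2 := by simp [blockUnion]
  rw [h, measureReal_biUnion_finset (β.pairwiseDisjoint_blocks.subset hB)
    (fun _ _ => measurableSet_Ioo) (fun _ _ => measure_Ioo_lt_top.ne)]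
  refine Eq.trans ?_ (Finset.tsum_subtype B mass).symm
  refine Finset.sum_congr rfl fun p hp => ?_
  rw [Real.volume_real_Ioo_of_le (β.blocks_lt p (hB hp)).le, mass]

/-! ### The sliding map and the Hausdorff distance -/

section slideMap

variable {β : IntervalPartition} {B : Set (ℝ × ℝ)}

theorem slideMap_add (hB : B ⊆ β.blocks) {x y : ℝ} (hxy : x ≤ y) :
    slideMap B y = slideMap B x + volume.real (Set.Ioc x y ∩ blockUnion B) := by
  have hfin : volume (blockUnion B) ≠ ⊤ :=
    measure_ne_top_of_subset (blockUnion_subset β hB) (by simp)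
  rw [slideMap, slideMap, ← measureReal_union _
    (measurableSet_Ioc.inter (measurableSet_blockUnion B))
    (measure_ne_top_of_subset Set.inter_subset_right hfin)
    (measure_ne_top_of_subset Set.inter_subset_right hfin),
    ← Set.union_inter_distrib_right, Set.Iic_union_Ioc_eq_Iic hxy]
  exact (Set.Iic_disjoint_Ioc le_rfl).mono Set.inter_subset_left Set.inter_subset_left

theorem slideMap_mono (hB : B ⊆ β.blocks) : Monotone (slideMap B) := fun x y hxy => by
  rw [slideMap_add hB hxy]
  linarith [measureReal_nonneg (μ := volume) (s := Set.Ioc x y ∩ blockUnion B)]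

theorem slideMap_sub_le (hB : B ⊆ β.blocks) {x y : ℝ} (hxy : x ≤ y) :
    slideMap B y - slideMap B x ≤ y - x := by
  rw [slideMap_add hB hxy, add_sub_cancel_left, ← Real.volume_real_Ioc_of_le hxy]
  exact measureReal_mono Set.inter_subset_left (by simp)

theorem continuous_slideMap (hB : B ⊆ β.blocks) : Continuous (slideMap B) := by
  refine LipschitzWith.continuous (K := 1) (LipschitzWith.of_le_add fun x y => ?_)
  rcases le_total x y with h | h
  · linarith [slideMap_mono hB h, dist_nonneg (x := x) (y := y)]
  · rw [Real.dist_eq, abs_of_nonneg (by linarith)]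
    linarith [slideMap_sub_le hB h]

/-- Retained blocks are moved isometrically. -/
theorem slideMap_of_subset (hB : B ⊆ β.blocks) {x y : ℝ} (hxy : x ≤ y)
    (h : Set.Ioo x y ⊆ blockUnion B) : slideMap B y = slideMap B x + (y - x) := by
  refine le_antisymm (by linarith [slideMap_sub_le hB hxy]) ?_
  rw [slideMap_add hB hxy, ← Real.volume_real_Ioo_of_le hxy]
  gcongr
  · exact measure_ne_top_of_subset Set.inter_subset_left (by simp)
  · exact fun z hz => ⟨⟨hz.1, hz.2.le⟩, h hz⟩

/-- Deleted intervals are collapsed. -/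
theorem slideMap_of_disjoint (hB : B ⊆ β.blocks) {x y : ℝ} (hxy : x ≤ y)
    (h : ∀ z ∈ Set.Ioo x y, z ∉ blockUnion B) : slideMap B y = slideMap B x := by
  have h0 : volume.real (Set.Ioc x y ∩ blockUnion B) = 0 := by
    have : volume (Set.Ioc x y ∩ blockUnion B) = 0 := by
      refine measure_mono_null (t := {y}) ?_ (by simp)
      rintro z ⟨hz, hzU⟩
      by_contra hne
      exact h z ⟨hz.1, lt_of_le_of_ne hz.2 hne⟩ hzU
    simp [Measure.real, this]
  rw [slideMap_add hB hxy, h0, add_zero]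

theorem slideMap_zero (hB : B ⊆ β.blocks) : slideMap B 0 = 0 := by
  have : Set.Iic 0 ∩ blockUnion B = ∅ := by
    ext z
    simp only [Set.mem_inter_iff, Set.mem_Iic, Set.mem_empty_iff_false, iff_false, not_and]
    exact fun hz hU => absurd (blockUnion_subset β hB hU).1 (not_lt.2 hz)
  simp [slideMap, this]

theorem slideMap_length (hB : B ⊆ β.blocks) :
    slideMap B β.length = volume.real (blockUnion B) := by
  rw [slideMap, Set.inter_eq_right.2]
  exact fun z hz => (blockUnion_subset β hB hz).2.le

/-- At the left end of a retained block the sliding map takes the value prescribed by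
`slideOffset`, since a retained block meeting `(-∞, p.1]` lies entirely in it. -/
theorem slideMap_left (hB : B ⊆ β.blocks) (hf : B.Finite) {p : ℝ × ℝ} (hp : p ∈ B) :
    slideMap B p.1 = slideOffset B p := by
  have hsub : {q : ℝ × ℝ | q ∈ B ∧ q.2 ≤ p.1} ⊆ B := fun q hq => hq.1
  have hoff : volume.real (blockUnion {q : ℝ × ℝ | q ∈ B ∧ q.2 ≤ p.1}) = slideOffset B p :=
    measureReal_blockUnion β (hsub.trans hB) (hf.subset hsub)
  rw [← hoff, slideMap]
  refine congrArg volume.real (Set.ext fun z => ?_)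
  rw [Set.mem_inter_iff, Set.mem_Iic, mem_blockUnion, mem_blockUnion]
  constructor
  · rintro ⟨hz, q, hq, h1, h2⟩
    refine ⟨q, ⟨hq, ?_⟩, h1, h2⟩
    have hlt := β.blocks_lt p (hB hp)
    rcases eq_or_ne p q with rfl | hne
    · linarith
    rcases le_or_le β (hB hp) (hB hq) hne with h | h
    · linarith
    · exact h
  · rintro ⟨q, ⟨hq, h⟩, h1, h2⟩
    exact ⟨by linarith, q, hq, h1, h2⟩

theorem slideMap_of_mem (hB : B ⊆ β.blocks) (hf : B.Finite) {p : ℝ × ℝ} (hp : p ∈ B) {x : ℝ}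
    (h1 : p.1 ≤ x) (h2 : x ≤ p.2) : slideMap B x = slideOffset B p + (x - p.1) := by
  rw [slideMap_of_subset hB h1, slideMap_left hB hf hp]
  exact fun z hz => mem_blockUnion.2 ⟨p, hp, hz.1, hz.2.trans_le h2⟩

variable {γ : IntervalPartition}

theorem mem_cset {x : ℝ} :
    x ∈ β.cset ↔ (0 ≤ x ∧ x ≤ β.length) ∧ ∀ p ∈ β.blocks, p.1 < x → p.2 ≤ x := by
  simp only [cset, Set.mem_sdiff, Set.mem_Icc, Set.mem_iUnion, Set.mem_Ioo, exists_prop,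
    not_exists, not_and, not_lt]

theorem length_of_isSlide (hB : B ⊆ β.blocks) (hf : B.Finite) (hS : IsSlide B γ) :
    γ.length = slideMap B β.length := by
  rw [slideMap_length hB, measureReal_blockUnion β hB hf, hS.2]

theorem slideMap_mem_cset (hB : B ⊆ β.blocks) (hf : B.Finite) (hS : IsSlide B γ) {x : ℝ}
    (hx : x ∈ β.cset) : slideMap B x ∈ γ.cset := by
  rw [mem_cset] at hx ⊢
  refine ⟨⟨measureReal_nonneg, ?_⟩, ?_⟩
  · rw [length_of_isSlide hB hf hS]
    exact slideMap_mono hB hx.1.2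
  · rw [hS.1]
    rintro _ ⟨p, hp, rfl⟩ h
    dsimp only at h ⊢
    have hlt : p.1 < x := by
      by_contra! hle
      have := slideMap_mono hB hle
      rw [slideMap_left hB hf hp] at this
      linarith
    have := slideMap_mono hB (hx.2 p (hB hp) hlt)
    rwa [slideMap_of_mem hB hf hp (β.blocks_lt p (hB hp)).le le_rfl] at this

theorem left_mem_cset {q : ℝ × ℝ} (hq : q ∈ β.blocks) : q.1 ∈ β.cset := by
  have hlt := β.blocks_lt q hq
  have hs := β.blocks_sub q hq
  refine mem_cset.2 ⟨⟨hs.1, by linarith⟩, fun p hp h => ?_⟩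
  rcases eq_or_ne p q with rfl | hne
  · exact absurd h (lt_irrefl _)
  rcases le_or_le β hp hq hne with h' | h' <;> linarith

/-- The sliding map is onto between complements: a preimage inside a deleted block may be moved
to the left end of that block. -/
theorem exists_slideMap_eq (hB : B ⊆ β.blocks) (hf : B.Finite) (hS : IsSlide B γ) {y : ℝ}
    (hy : y ∈ γ.cset) : ∃ x ∈ β.cset, slideMap B x = y := by
  rw [mem_cset] at hy
  have hmem : y ∈ Set.Icc (slideMap B 0) (slideMap B β.length) := by
    rw [slideMap_zero hB, ← length_of_isSlide hB hf hS]
    exact hy.1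
  obtain ⟨x, hx, rfl⟩ :=
    intermediate_value_Icc β.length_nonneg (continuous_slideMap hB).continuousOn hmem
  by_cases hxc : x ∈ β.cset
  · exact ⟨x, hxc, rfl⟩
  obtain ⟨q, hq, h1, h2⟩ : ∃ q ∈ β.blocks, q.1 < x ∧ x < q.2 := by
    by_contra! h
    exact hxc (mem_cset.2 ⟨hx, h⟩)
  by_cases hqB : q ∈ B
  · -- inside a retained block the image lies in the open slid block, outside the complement
    exfalso
    have h3 := slideMap_of_mem hB hf hqB h1.le h2.le
    have := hy.2 (slideOffset B q, slideOffset B q + mass q)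
      (by rw [hS.1]; exact ⟨q, hqB, rfl⟩) (by dsimp only; linarith)
    dsimp only [mass] at this
    linarith
  · refine ⟨q.1, left_mem_cset hq, (slideMap_of_disjoint hB h1.le fun z hz hzU => ?_).symm⟩
    obtain ⟨p, hp, h3, h4⟩ := mem_blockUnion.1 hzU
    have hne : p ≠ q := fun h => hqB (h ▸ hp)
    rcases le_or_le β (hB hp) hq hne with h | h <;> linarith [hz.1, hz.2]

theorem dist_slideMap_le (hB : B ⊆ β.blocks) {x : ℝ} (hx : x ∈ β.cset) :
    dist x (slideMap B x) ≤ β.length - volume.real (blockUnion B) := by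
  obtain ⟨⟨h0, h1⟩, -⟩ := mem_cset.1 hx
  have h2 := slideMap_sub_le hB h0
  have h3 := slideMap_sub_le hB h1
  rw [slideMap_zero hB] at h2
  rw [slideMap_length hB] at h3
  rw [Real.dist_eq, abs_of_nonneg (by linarith)]
  linarith

theorem measureReal_blockUnion_le (hB : B ⊆ β.blocks) :
    volume.real (blockUnion B) ≤ β.length := by
  have := slideMap_sub_le hB β.length_nonneg
  rw [slideMap_zero hB, slideMap_length hB] at this
  linarith

/-- Deleting blocks and sliding moves the complement by at most the deleted mass. -/
theorem dH_le (hB : B ⊆ β.blocks) (hf : B.Finite) (hS : IsSlide B γ) :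
    dH γ β ≤ β.length - volume.real (blockUnion B) := by
  refine Metric.hausdorffDist_le_of_mem_dist
    (by linarith [measureReal_blockUnion_le hB]) (fun y hy => ?_) fun x hx => ?_
  · obtain ⟨x, hx, rfl⟩ := exists_slideMap_eq hB hf hS hy
    exact ⟨x, hx, by rw [dist_comm]; exact dist_slideMap_le hB hx⟩
  · exact ⟨_, slideMap_mem_cset hB hf hS hx, dist_slideMap_le hB hx⟩

end slideMap

/-! ### The deleted mass tends to zero -/

theorem volume_blockUnion_blocks (β : IntervalPartition) :
    volume (blockUnion β.blocks) = ENNReal.ofReal β.length := by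
  have hsub : blockUnion β.blocks ⊆ Set.Icc 0 β.length :=
    (blockUnion_subset β subset_rfl).trans Set.Ioo_subset_Icc_self
  have h : volume (Set.Icc 0 β.length) = volume (blockUnion β.blocks) := by
    refine le_antisymm ?_ (measure_mono hsub)
    calc volume (Set.Icc 0 β.length)
        ≤ volume (Set.Icc 0 β.length \ blockUnion β.blocks) + volume (blockUnion β.blocks) := by
          rw [← tsub_le_iff_right]; exact le_measure_sdiff
      _ = volume (blockUnion β.blocks) := by
          rw [show volume (Set.Icc 0 β.length \ blockUnion β.blocks) = 0 from β.compl_null,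
            zero_add]
  rw [← h, Real.volume_Icc, sub_zero]

/-- Every block is eventually retained: while `p` is missing, the `n` retained blocks have mass at
least `mass p` each and total mass at most `‖β‖`, so `n ≤ ‖β‖ / mass p`. -/
theorem eventually_mem {β : IntervalPartition} {A : ℕ → Set (ℝ × ℝ)}
    (hA : ∀ n, IsNLargest β n (A n)) {p : ℝ × ℝ} (hp : p ∈ β.blocks) :
    ∀ᶠ n in atTop, p ∈ A n := by
  have hm : 0 < mass p := sub_pos.2 (β.blocks_lt p hp)
  filter_upwards [(tendsto_natCast_atTop_atTop (R := ℝ)).eventually_gt_atTop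
    (β.length / mass p)] with n hn
  by_contra hpn
  obtain ⟨hB, hf, hcard, hmax⟩ := hA n
  have h1 := measureReal_blockUnion_le hB
  rw [measureReal_blockUnion β hB hf] at h1
  have h2 : (n : ℝ) * mass p ≤ ∑' q : A n, mass q.val := by
    have := hf.fintype
    have hn' : n = (Finset.univ : Finset (A n)).card := by
      rw [Finset.card_univ, ← Nat.card_eq_fintype_card, Nat.card_coe_set_eq, hcard]
    rw [tsum_fintype, ← nsmul_eq_mul]
    refine (congrArg (· • mass p) hn').trans_le ?_
    refine Finset.card_nsmul_le_sum _ _ _ fun q _ => ?_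
    rcases hmax q q.2 p hp hpn with h | h
    · exact h.le
    · exact h.1.le
  rw [div_lt_iff₀ hm] at hn
  linarith

theorem tendsto_volume_blockUnion {β : IntervalPartition} {A : ℕ → Set (ℝ × ℝ)}
    (hA : ∀ n, IsNLargest β n (A n)) :
    Tendsto (fun n => volume.real (blockUnion (A n))) atTop (𝓝 β.length) := by
  have hmain : Tendsto (fun n => volume (blockUnion (A n))) atTop
      (𝓝 (volume (blockUnion β.blocks))) := by
    refine tendsto_order.2 ⟨fun c hc => ?_, fun c hc => Eventually.of_forall fun n =>
      (measure_mono (Set.biUnion_subset_biUnion_left (hA n).1)).trans_lt hc⟩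
    have hcount : β.blocks.Countable :=
      β.pairwiseDisjoint_blocks.countable_of_isOpen
        (fun _ _ => isOpen_Ioo) fun p hp => Set.nonempty_Ioo.2 (β.blocks_lt p hp)
    rw [blockUnion, measure_biUnion hcount β.pairwiseDisjoint_blocks
      (fun _ _ => measurableSet_Ioo), ENNReal.tsum_eq_iSup_sum, lt_iSup_iff] at hc
    obtain ⟨F, hF⟩ := hc
    have hev : ∀ᶠ n in atTop, ∀ p ∈ F, p.1 ∈ A n :=
      (Filter.eventually_all_finset F).2 fun p _ => eventually_mem hA p.2
    filter_upwards [hev] with n hn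
    refine hF.trans_le ?_
    rw [← measure_biUnion_finset (f := fun p : β.blocks => Set.Ioo p.1.1 p.1.2)
      (fun p _ q _ hpq => β.pairwiseDisjoint_blocks p.2 q.2 (Subtype.coe_ne_coe.2 hpq))
      (fun _ _ => measurableSet_Ioo)]
    refine measure_mono (Set.iUnion₂_subset fun p hp => ?_)
    exact Set.subset_biUnion_of_mem (u := fun p : ℝ × ℝ => Set.Ioo p.1 p.2) (hn p hp)
  rw [volume_blockUnion_blocks] at hmain
  have := (ENNReal.tendsto_toReal ENNReal.ofReal_ne_top).comp hmain
  rwa [ENNReal.toReal_ofReal β.length_nonneg] at this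

/-! ### Finite partitions have zero diversity -/

theorem hasDiversity_zero_of_finite {a : ℝ} (ha : 0 < a) {γ : IntervalPartition}
    (hf : γ.blocks.Finite) (t : ℝ) : HasDiversity a γ t 0 := by
  have hpow : Tendsto (fun h : ℝ => h ^ a) (𝓝[>] 0) (𝓝 0) := by
    have := (Real.continuousAt_rpow_const 0 a (Or.inr ha.le)).tendsto
    rw [Real.zero_rpow ha.ne'] at this
    exact this.mono_left nhdsWithin_le_nhds
  have h0 : Tendsto (fun h : ℝ => Real.Gamma (1 - a) * h ^ a) (𝓝[>] 0) (𝓝 0) := by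
    simpa using hpow.const_mul (Real.Gamma (1 - a))
  refine h0.zero_mul_isBoundedUnder_le (isBoundedUnder_of ⟨γ.blocks.ncard, fun h => ?_⟩)
  simp only [Function.comp_apply, Real.norm_natCast, Nat.cast_le]
  exact Set.ncard_le_ncard (fun p hp => hp.1) hf

end IntervalPartition

open IntervalPartition in
/-- total diversity is not `d_H`-continuous on `I_α`: if
`β ∈ I_α` has continuous diversity function and positive total diversity, and
`γ n` is obtained from `β` by keeping only the `n` largest blocks (ties broken
left-to-right) and sliding them together, then `d_H(γ n, β) → 0`, each `γ n`
has the diversity property with total diversity `0`, and hence the total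
diversities do not converge to `𝒟_β(∞) > 0`. -/
theorem diversity_not_dH_continuous (a : ℝ) (ha : 0 < a) (ha' : a < 1)
    (β : IntervalPartition) (hβ : HasDiversityProp a β)
    (hcont : ContinuousOn (diversity a β) (Set.Icc 0 β.length))
    (hpos : 0 < totalDiversity a β)
    (A : ℕ → Set (ℝ × ℝ)) (γ : ℕ → IntervalPartition)
    (hA : ∀ n, IsNLargest β n (A n)) (hS : ∀ n, IsSlide (A n) (γ n)) :
    Tendsto (fun n => dH (γ n) β) atTop (𝓝 0) ∧
    (∀ n, HasDiversityProp a (γ n)) ∧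
    (∀ n, totalDiversity a (γ n) = 0) ∧
    ¬ Tendsto (fun n => totalDiversity a (γ n)) atTop (𝓝 (totalDiversity a β)) := by
  have hdiv : ∀ n t, HasDiversity a (γ n) t 0 := fun n t =>
    hasDiversity_zero_of_finite ha (by rw [(hS n).1]; exact (hA n).2.1.image _) t
  have htot : ∀ n, totalDiversity a (γ n) = 0 := fun n => (hdiv n _).limUnder_eq
  refine ⟨?_, fun n t _ => ⟨0, hdiv n t⟩, htot, fun h => ?_⟩
  · refine squeeze_zero (fun n => Metric.hausdorffDist_nonneg)
      (fun n => dH_le (hA n).1 (hA n).2.1 (hS n)) ?_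
    simpa using (tendsto_volume_blockUnion hA).const_sub β.length
  · simp only [htot] at h
    exact hpos.ne (tendsto_nhds_unique tendsto_const_nhds h)
end

section
/- The map M : I_α → M([0,∞)) defined by M(β) = Σ_{U∈β} Leb(U)·δ_{𝒟_β(U)} (a finite Borel measure on [0,∞) placing mass Leb(U) at the point 𝒟_β(U) for each block U of β) is continuous from (I_α, d_α) to the space of finite Borel measures on [0,∞) with the topology of weak convergence. -/
/-!
The measure `M(β)` integrates `g` to `∑ Leb(U) g(𝒟_β(U))`, and the masses `Leb(U)` are summable
with sum at most `‖β‖`. Hence, for a correspondence between `γ` and `β`, the unmatched blocks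
contribute at most `‖g‖` times the unmatched length, which the distortion controls
(`abs_integral_Mmap_sub_sum_le`). For matched pairs `(U, V)`,
`Leb(U) g(𝒟(U)) - Leb(V) g(𝒟(V))` splits into a mass difference, again controlled by the
distortion, and `Leb(V) (g(𝒟(U)) - g(𝒟(V)))`.

Since `g` need not be uniformly continuous, the last term is handled by fixing a finite set `F` of
blocks of the limit `β` that carries all but `ε` of the mass: continuity of `g` at the finitely many
points `𝒟_β(V)`, `V ∈ F`, gives one modulus `δ` valid for all of them, and pairs with `V ∉ F`
cost at most `2 ‖g‖ ε`.
-/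

open MeasureTheory Filter Topology Set

open IntervalPartition in
/-- The measure `M(β) = Σ_{U ∈ β} Leb(U) δ_{𝒟_β(U)}` on `[0,∞) ⊆ ℝ`. -/
noncomputable def Mmap (a : ℝ) (β : IntervalPartition) : Measure ℝ :=
  Measure.sum (fun p : β.blocks =>
    (ENNReal.ofReal (mass p.val)) • Measure.dirac (blockDiversity a β p.val))

namespace IntervalPartition

lemma tsum_ofReal_mass_le (β : IntervalPartition) :
    ∑' p : β.blocks, ENNReal.ofReal (mass p.val) ≤ ENNReal.ofReal β.length := by
  have h1 := tsum_meas_le_meas_iUnion_of_disjoint (volume : Measure ℝ)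
    (As := fun p : β.blocks => Set.Ioo p.val.1 p.val.2) (fun p => measurableSet_Ioo) (by
      intro p q hpq
      exact Set.disjoint_iff_inter_eq_empty.2
        (β.blocks_disjoint _ p.2 _ q.2 (fun h => hpq (Subtype.ext h))))
  have h2 : (⋃ p : β.blocks, Set.Ioo p.val.1 p.val.2) ⊆ Set.Icc 0 β.length := by
    refine Set.iUnion_subset fun p t ht => ?_
    have := β.blocks_sub _ p.2
    exact ⟨this.1.trans ht.1.le, ht.2.le.trans this.2⟩
  have h3 := h1.trans (measure_mono h2)
  simpa [Real.volume_Ioo, Real.volume_Icc, mass] using h3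

lemma mass_nonneg (β : IntervalPartition) (p : β.blocks) : 0 ≤ mass p.val :=
  sub_nonneg.2 (β.blocks_lt _ p.2).le

lemma summable_mass (β : IntervalPartition) : Summable (fun p : β.blocks => mass p.val) := by
  have h := ENNReal.summable_toReal
    (ne_top_of_le_ne_top ENNReal.ofReal_ne_top β.tsum_ofReal_mass_le)
  exact h.congr fun p => ENNReal.toReal_ofReal (β.mass_nonneg p)

lemma tsum_mass_le (β : IntervalPartition) : ∑' p : β.blocks, mass p.val ≤ β.length := by
  rw [← ENNReal.ofReal_le_ofReal_iff β.length_nonneg,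
    ENNReal.ofReal_tsum_of_nonneg β.mass_nonneg β.summable_mass]
  exact β.tsum_ofReal_mass_le

lemma sum_mass_le_s10 (β : IntervalPartition) (s : Finset β.blocks) :
    ∑ p ∈ s, mass p.val ≤ β.length :=
  (β.summable_mass.sum_le_tsum s (fun p _ => β.mass_nonneg p)).trans β.tsum_mass_le

instance isFiniteMeasure_Mmap (a : ℝ) (β : IntervalPartition) : IsFiniteMeasure (Mmap a β) := by
  constructor
  rw [Mmap, Measure.sum_apply _ MeasurableSet.univ]
  simpa using β.tsum_ofReal_mass_le.trans_lt ENNReal.ofReal_lt_top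

lemma hasSum_integral_Mmap (a : ℝ) (β : IntervalPartition) (g : BoundedContinuousFunction ℝ ℝ) :
    HasSum (fun p : β.blocks => mass p.val * g (blockDiversity a β p.val))
      (∫ t, g t ∂(Mmap a β)) := by
  have h := hasSum_integral_measure (g.integrable (Mmap a β))
  have heq : (fun p : β.blocks => mass p.val * g (blockDiversity a β p.val)) = fun p : β.blocks =>
      ∫ t, g t ∂(ENNReal.ofReal (mass p.val) • Measure.dirac (blockDiversity a β p.val)) := by
    funext p
    rw [integral_smul_measure, integral_dirac, ENNReal.toReal_ofReal (β.mass_nonneg p),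
      smul_eq_mul]
  rw [heq]
  exact h

/-- The blocks outside a finite set `s` contribute to `∫ g dM(β)` at most `‖g‖` times the length
not covered by `s`. -/
lemma abs_integral_Mmap_sub_sum_le (a : ℝ) (β : IntervalPartition)
    (g : BoundedContinuousFunction ℝ ℝ) (s : Finset β.blocks) :
    |∫ t, g t ∂(Mmap a β) - ∑ p ∈ s, mass p.val * g (blockDiversity a β p.val)|
      ≤ ‖g‖ * (β.length - ∑ p ∈ s, mass p.val) := by
  have hf := hasSum_integral_Mmap a β g
  have h1 := hf.summable.sum_add_tsum_compl (s := s)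
  have h2 := β.summable_mass.sum_add_tsum_compl (s := s)
  rw [hf.tsum_eq] at h1
  have hm : Summable (fun p : ↑((s : Set β.blocks)ᶜ) => ‖g‖ * mass p.val.val) :=
    (β.summable_mass.subtype _).mul_left _
  have h3 := tsum_of_norm_bounded hm.hasSum
    (f := fun p : ↑((s : Set β.blocks)ᶜ) => mass p.val.val * g (blockDiversity a β p.val.val))
    (fun p => by
      rw [norm_mul, Real.norm_of_nonneg (β.mass_nonneg _), mul_comm]
      exact mul_le_mul_of_nonneg_right (g.norm_coe_le_norm _) (β.mass_nonneg _))
  rw [tsum_mul_left, Real.norm_eq_abs] at h3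
  rw [← h1, add_sub_cancel_left]
  refine h3.trans (mul_le_mul_of_nonneg_left ?_ (norm_nonneg g))
  linarith [β.tsum_mass_le]

/-- The blocks `U_j` of a correspondence are pairwise distinct, since a block has positive length
and `U_j` lies to the left of `U_k` for `j < k`. -/
lemma IsCorrespondence.injective_fst {β γ : IntervalPartition} {n : ℕ}
    {c : Fin n → (ℝ × ℝ) × (ℝ × ℝ)} (h : IsCorrespondence β γ n c) :
    Function.Injective (fun j => (⟨(c j).1, (h.1 j).1⟩ : β.blocks)) := by
  refine Function.Injective.of_lt_imp_ne fun j k hjk heq => ?_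
  have heq : (c j).1 = (c k).1 := congrArg Subtype.val heq
  have h1 := (h.2 j k hjk).1
  have h2 := β.blocks_lt _ (h.1 j).1
  rw [← heq] at h1
  linarith

lemma IsCorrespondence.injective_snd {β γ : IntervalPartition} {n : ℕ}
    {c : Fin n → (ℝ × ℝ) × (ℝ × ℝ)} (h : IsCorrespondence β γ n c) :
    Function.Injective (fun j => (⟨(c j).2, (h.1 j).2⟩ : γ.blocks)) := by
  refine Function.Injective.of_lt_imp_ne fun j k hjk heq => ?_
  have heq : (c j).2 = (c k).2 := congrArg Subtype.val heq
  have h1 := (h.2 j k hjk).2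
  have h2 := γ.blocks_lt _ (h.1 j).2
  rw [← heq] at h1
  linarith

/-- If the finite set `F` of blocks of `β` carries all but `ε` of its mass, and `g` varies by at
most `ε` within distance `δ` of each diversity `𝒟_β(V)`, `V ∈ F`, then a correspondence of
distortion below `min δ ε` forces the integrals of `g` to be close. -/
lemma abs_integral_sub_le (a : ℝ) (β γ : IntervalPartition)
    (g : BoundedContinuousFunction ℝ ℝ) (F : Finset β.blocks) {ε δ : ℝ} (hε : 0 < ε)
    (hF : ∑' p : β.blocks, mass p.val - ∑ p ∈ F, mass p.val ≤ ε)
    (hδ : ∀ p ∈ F, ∀ t, |t - blockDiversity a β p.val| < δ →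
      |g t - g (blockDiversity a β p.val)| ≤ ε)
    {n : ℕ} {c : Fin n → (ℝ × ℝ) × (ℝ × ℝ)} (hc : IsCorrespondence γ β n c)
    (hd : alphaDistortion a γ β n c < min δ ε) :
    |∫ t, g t ∂(Mmap a γ) - ∫ t, g t ∂(Mmap a β)| ≤ (4 * ‖g‖ + β.length) * ε := by
  classical
  have hC := norm_nonneg g
  obtain ⟨hdδ, hdε⟩ := lt_min_iff.1 hd
  have hH : hausDistortion γ β n c < ε := (le_max_left _ _).trans_lt hdε
  have hH1 := (le_max_left _ _).trans_lt hH
  have hH2 := (le_max_right _ _).trans_lt hH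
  have hdiv : ∀ j, |blockDiversity a γ (c j).1 - blockDiversity a β (c j).2| < δ := fun j =>
    lt_of_le_of_lt ((le_ciSup (f := fun j : Fin n =>
      |blockDiversity a γ (c j).1 - blockDiversity a β (c j).2|)
      (Set.finite_range _).bddAbove j).trans ((le_max_left _ _).trans (le_max_right _ _))) hdδ
  set u : Fin n → γ.blocks := fun j => ⟨(c j).1, (hc.1 j).1⟩ with hu
  set v : Fin n → β.blocks := fun j => ⟨(c j).2, (hc.1 j).2⟩ with hv
  have hui : Function.Injective u := hc.injective_fst
  have hvi : Function.Injective v := hc.injective_snd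
  have hU := abs_integral_Mmap_sub_sum_le a γ g (Finset.univ.image u)
  have hV := abs_integral_Mmap_sub_sum_le a β g (Finset.univ.image v)
  rw [Finset.sum_image hui.injOn, Finset.sum_image hui.injOn] at hU
  rw [Finset.sum_image hvi.injOn, Finset.sum_image hvi.injOn] at hV
  -- Matched pairs whose second block lies outside `F` have total mass at most `ε`.
  have hout : ∑ j : Fin n, (if v j ∈ F then 0 else mass (v j).val) ≤ ε := by
    have h1 : ∑ j : Fin n, (if v j ∈ F then 0 else mass (v j).val)
        = ∑ p ∈ Finset.univ.image v \ F, mass p.val := by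
      rw [← Finset.sum_image (f := fun p : β.blocks => if p ∈ F then 0 else mass p.val) hvi.injOn,
        Finset.sdiff_eq_filter, Finset.sum_filter]
      exact Finset.sum_congr rfl fun p _ => by by_cases h : p ∈ F <;> simp [h]
    have h2 := β.summable_mass.sum_le_tsum (Finset.univ.image v \ F ∪ F)
      (fun p _ => β.mass_nonneg p)
    rw [Finset.sum_union Finset.sdiff_disjoint] at h2
    linarith
  have hin : ∑ j : Fin n, mass (v j).val ≤ β.length := by
    have := β.sum_mass_le_s10 (Finset.univ.image v)
    rwa [Finset.sum_image hvi.injOn] at this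
  have hmid : |∑ j, mass (u j).val * g (blockDiversity a γ (u j).val)
      - ∑ j, mass (v j).val * g (blockDiversity a β (v j).val)|
      ≤ ‖g‖ * ∑ j, |mass (c j).1 - mass (c j).2| + ε * ∑ j, mass (v j).val
        + 2 * ‖g‖ * ∑ j, (if v j ∈ F then 0 else mass (v j).val) := by
    rw [← Finset.sum_sub_distrib, Finset.mul_sum, Finset.mul_sum, Finset.mul_sum,
      ← Finset.sum_add_distrib, ← Finset.sum_add_distrib]
    refine (Finset.abs_sum_le_sum_abs _ _).trans (Finset.sum_le_sum fun j _ => ?_)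
    have hm := β.mass_nonneg (v j)
    set x := blockDiversity a γ (u j).val
    set y := blockDiversity a β (v j).val with hy
    have hx : |g x| ≤ ‖g‖ := g.norm_coe_le_norm x
    have hgy : |g y| ≤ ‖g‖ := g.norm_coe_le_norm y
    have hsplit : mass (u j).val * g x - mass (v j).val * g y
        = (mass (c j).1 - mass (c j).2) * g x + mass (v j).val * (g x - g y) := by
      simp only [hu, hv]; ring
    have h1 : |(mass (c j).1 - mass (c j).2) * g x| ≤ ‖g‖ * |mass (c j).1 - mass (c j).2| := by
      rw [abs_mul, mul_comm]; gcongr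
    have h2 : |mass (v j).val * (g x - g y)| ≤ ε * mass (v j).val
        + 2 * ‖g‖ * (if v j ∈ F then 0 else mass (v j).val) := by
      rw [abs_mul, abs_of_nonneg hm]
      by_cases h : v j ∈ F
      · have := hδ _ h x (hdiv j)
        simp only [h, if_true]
        nlinarith
      · have := abs_sub (g x) (g y)
        simp only [h, if_false]
        nlinarith [mul_nonneg hε.le hm]
    rw [hsplit]
    linarith [abs_add_le ((mass (c j).1 - mass (c j).2) * g x) (mass (v j).val * (g x - g y))]
  have habs : 0 ≤ ∑ j, |mass (c j).1 - mass (c j).2| :=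
    Finset.sum_nonneg fun j _ => abs_nonneg _
  have e1 : ‖g‖ * (γ.length - ∑ j, mass (u j).val)
      + ‖g‖ * ∑ j, |mass (c j).1 - mass (c j).2| ≤ ‖g‖ * ε := by
    rw [← mul_add]
    refine mul_le_mul_of_nonneg_left ?_ hC
    simp only [hu]; linarith
  have e2 : ‖g‖ * (β.length - ∑ j, mass (v j).val) ≤ ‖g‖ * ε := by
    refine mul_le_mul_of_nonneg_left ?_ hC
    simp only [hv]; linarith
  have e3 := mul_le_mul_of_nonneg_left hin hε.le
  have e4 := mul_le_mul_of_nonneg_left hout (by positivity : (0:ℝ) ≤ 2 * ‖g‖)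
  rw [abs_le] at hU hV hmid ⊢
  constructor <;> linarith [hU.1, hU.2, hV.1, hV.2, hmid.1, hmid.2]

end IntervalPartition

open IntervalPartition in
/-- `M : I_α → M([0,∞))` is continuous from `(I_α, d_α)` into the
finite Borel measures with the topology of weak convergence: if `x n → β` in
`d_α` within `I_α` then `∫ g dM(x n) → ∫ g dM(β)` for every bounded continuous
`g`. -/
theorem M_weakly_continuous (a : ℝ) (ha : 0 < a) (ha' : a < 1)
    (β : IntervalPartition) (hβ : HasDiversityProp a β)
    (x : ℕ → IntervalPartition) (hx : ∀ n, HasDiversityProp a (x n))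
    (hconv : Tendsto (fun n => dA a (x n) β) atTop (𝓝 0)) :
    ∀ g : BoundedContinuousFunction ℝ ℝ,
      Tendsto (fun n => ∫ t, g t ∂(Mmap a (x n))) atTop
        (𝓝 (∫ t, g t ∂(Mmap a β))) := by
  intro g
  rw [Metric.tendsto_atTop]
  intro ε₀ hε₀
  have hC := norm_nonneg g
  have hL := β.length_nonneg
  have hK : 0 < 4 * ‖g‖ + β.length + 1 := by positivity
  set ε := ε₀ / (4 * ‖g‖ + β.length + 1) with hεdef
  have hε : 0 < ε := div_pos hε₀ hK
  obtain ⟨F, hF⟩ : ∃ F : Finset β.blocks,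
      ∑' p : β.blocks, mass p.val - ∑ p ∈ F, mass p.val ≤ ε := by
    obtain ⟨F, hF⟩ := (β.summable_mass.hasSum.eventually
      (lt_mem_nhds (sub_lt_self _ hε))).exists
    exact ⟨F, by linarith⟩
  -- A modulus of continuity of `g` common to the finitely many points `𝒟_β(V)`, `V ∈ F`.
  obtain ⟨δ, hδ0, hδ⟩ : ∃ δ > 0, ∀ p ∈ F, ∀ t, |t - blockDiversity a β p.val| < δ →
      |g t - g (blockDiversity a β p.val)| ≤ ε := by
    have h : ∀ᶠ δ in 𝓝[>] (0 : ℝ), ∀ p ∈ F, ∀ t, |t - blockDiversity a β p.val| < δ →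
        |g t - g (blockDiversity a β p.val)| ≤ ε := by
      rw [Filter.eventually_all_finset]
      intro p _
      obtain ⟨δ, hδ0, hδ⟩ := Metric.continuousAt_iff.1
        (g.continuous.continuousAt (x := blockDiversity a β p.val)) ε hε
      filter_upwards [Ioo_mem_nhdsGT hδ0] with r hr t ht
      exact (hδ (ht.trans hr.2)).le
    obtain ⟨δ, h1, h2⟩ := (h.and self_mem_nhdsWithin).exists
    exact ⟨δ, h2, h1⟩
  obtain ⟨N, hN⟩ := eventually_atTop.1 (hconv.eventually (gt_mem_nhds (lt_min hδ0 hε)))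
  refine ⟨N, fun n hn => ?_⟩
  -- The empty correspondence shows that the infimum defining `dA` is over a nonempty set.
  have hne : {r | ∃ k, ∃ c : Fin k → (ℝ × ℝ) × (ℝ × ℝ),
      IsCorrespondence (x n) β k c ∧ r = alphaDistortion a (x n) β k c}.Nonempty :=
    ⟨_, 0, Fin.elim0, ⟨fun j => j.elim0, fun j => j.elim0⟩, rfl⟩
  obtain ⟨_, ⟨k, c, hc, rfl⟩, hd⟩ := exists_lt_of_csInf_lt hne (hN n hn)
  have := abs_integral_sub_le a β (x n) g F hε hF hδ hc hd
  rw [Real.dist_eq]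
  refine this.trans_lt ?_
  have h : (4 * ‖g‖ + β.length + 1) * ε = ε₀ := mul_div_cancel₀ _ hK.ne'
  linarith
end
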